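/- arXiv:2008.06554 — 3 statements merged into one kernel-verified Lean document; each statement's English description precedes it below -/
import Mathlib

section
/- There is an absolute constant K such that the following holds in the Line setting. Assume u > (p+2)·log₂ v + log₂ q and let h := s/(u − (p+2)·log₂ v − log₂ q) + 1. For every deterministic MPC algorithm with m machines, local memory s bits, and at most q oracle queries per machine per round, every machine i, and every round k ≥ 0, the probability over uniformly random (RO, X) that |B_i^{(k)}| > h and the event E^{(k)} does not occur is at most K·w·2^(−(u − (p+2)·log₂ v − log₂ q)). (The paper, Lemma 3.5, states this bound as 2^(−(u − (log²w + 2)·log v − log q)); the factor K·w accounts for bookkeeping such as recording the index j_k.) -/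
/-- Probability of `P` under the uniform distribution on a finite type `Ω`. -/
noncomputable def unifProb {Ω : Type} [Fintype Ω] (P : Ω → Prop) : ℝ :=
  (Set.ncard {ω : Ω | P ω} : ℝ) / (Fintype.card Ω : ℝ)
/-- Bit strings of length `k`. -/
abbrev Bits (k : ℕ) := Fin k → Bool

/-- The `j`-th bit (`0`-based) of a bit string, `false` out of range. -/
def bitAt {k : ℕ} (y : Bits k) (j : ℕ) : Bool := if h : j < k then y ⟨j, h⟩ else false

/-- The `i`-th block (`0`-based) of the input `X = (x_1, …, x_v)`. -/
def getX {u v : ℕ} (X : Fin v → Bits u) (i : ℕ) : Bits u :=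
  if h : i < v then X ⟨i, h⟩ else fun _ => false
/-- The integer encoded by the first `κ` bits of a bit string. -/
def natOf {n : ℕ} (y : Bits n) (κ : ℕ) : ℕ :=
  ∑ j ∈ Finset.range κ, if bitAt y j then 2 ^ j else 0

/-- `⟨i, x, ρ⟩` : the `n`-bit concatenation of the `W`-bit binary encoding of `i`, the
`u`-bit strings `x` and `ρ`, and trailing zeros. -/
def lineStr (n W u : ℕ) (i : ℕ) (x ρ : Bits u) : Bits n := fun j =>
  if (j : ℕ) < W then Nat.testBit i (j : ℕ)
  else if (j : ℕ) < W + u then bitAt x ((j : ℕ) - W)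
  else if (j : ℕ) < W + 2 * u then bitAt ρ ((j : ℕ) - W - u)
  else false

/-- `lineChain n u v W κ RO X k = (ℓ_{k+1} − 1, r_{k+1})` : the Line chain, with the
pointer stored `0`-based.  `ℓ_1 = 1, r_1 = 0^u`; `e_i = ⟨i, x_{ℓ_i}, r_i⟩`;
`ℓ_{i+1} − 1` is the integer encoded by the first `κ` bits of `RO(e_i)` (reduced mod
`v`, which is the identity when `v = 2^κ`), and `r_{i+1}` is the `u` bits of `RO(e_i)`
in positions `κ+1, …, κ+u`. -/
def lineChain (n u v W κ : ℕ) (RO : Bits n → Bits n) (X : Fin v → Bits u) :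
    ℕ → ℕ × Bits u
  | 0 => (0, fun _ => false)
  | k + 1 =>
    let c := lineChain n u v W κ RO X k
    let e := lineStr n W u (k + 1) (getX X (c.1 % v)) c.2
    (natOf (RO e) κ % v, fun j => bitAt (RO e) (κ + (j : ℕ)))

/-- `lineE n u v W κ RO X k` is the paper's `e_{k+1}`. -/
def lineE (n u v W κ : ℕ) (RO : Bits n → Bits n) (X : Fin v → Bits u) (k : ℕ) : Bits n :=
  lineStr n W u (k + 1) (getX X ((lineChain n u v W κ RO X k).1 % v))
    (lineChain n u v W κ RO X k).2

/-- `branchE n u v W κ RO X j a c` is the branch entry `e'_c` determined by the paper's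
(1-based) index `j` and the (0-based) sequence `a` (only `a 1, …, a c` matter):
`e'_0 = ⟨j+1, x_{ℓ_{j+1}}, r_{j+1}⟩ = e_{j+1}`, and for `c ≥ 1`,
`e'_c = ⟨j+c+1, x_{a_c}, ρ_c⟩` where `ρ_c` is the `u` bits of `RO(e'_{c−1})` in
positions `κ+1, …, κ+u`. -/
def branchE (n u v W κ : ℕ) (RO : Bits n → Bits n) (X : Fin v → Bits u) (j : ℕ)
    (a : ℕ → Fin v) : ℕ → Bits n
  | 0 => lineE n u v W κ RO X j
  | c + 1 => lineStr n W u (j + c + 2) (X (a (c + 1)))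
      (fun t => bitAt (RO (branchE n u v W κ RO X j a c)) (κ + (t : ℕ)))
/-- Answers to the first `t` queries of a deterministic adaptive oracle algorithm whose
next-query function is `f`. -/
def advAns (n : ℕ) (RO : Bits n → Bits n) (f : List (Bits n) → Bits n) : ℕ → List (Bits n)
  | 0 => []
  | t + 1 => advAns n RO f t ++ [RO (f (advAns n RO f t))]

/-- The `(t+1)`-st query (so the paper's `q_{t+1}`) of the adaptive algorithm `f`. -/
def advQ (n : ℕ) (RO : Bits n → Bits n) (f : List (Bits n) → Bits n) (t : ℕ) : Bits n :=
  f (advAns n RO f t)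
/-- A deterministic MPC algorithm with `m` machines, local memory `s` bits, at most `q`
adaptive oracle queries (to an oracle on `n`-bit strings) per machine per round, on
inputs from `I`.  `init` splits the input into the machines' initial states, `qf k i` is
machine `i`'s next-query function in round `k` (from its state and the answers received
so far in the round), and `cf k i` produces the messages machine `i` sends to each
machine at the end of round `k`; each machine receives at most `s` bits per round. -/
structure MPC (n s q m : ℕ) (I : Type) where
  init : I → Fin m → Bits s
  qf : ℕ → Fin m → Bits s → List (Bits n) → Bits n
  cf : ℕ → Fin m → Bits s → List (Bits n) → Fin m → List Bool
  comm_le : ∀ (k : ℕ) (st : Fin m → Bits s) (ans : Fin m → List (Bits n)) (j : Fin m),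
    (∑ i : Fin m, (cf k i (st i) (ans i) j).length) ≤ s

/-- Pad/truncate a list of booleans to an `s`-bit state. -/
def listToBits (s : ℕ) (L : List Bool) : Bits s := fun b => L.getD (b : ℕ) false

/-- `mstate A RO X k i` : the state of machine `i` at the beginning of round `k` when the
MPC algorithm `A` is run with oracle `RO` on input `X`. -/
def mstate {n s q m : ℕ} {I : Type} (A : MPC n s q m I) (RO : Bits n → Bits n) (X : I) :
    ℕ → Fin m → Bits s
  | 0 => A.init X
  | k + 1 => fun j =>
      listToBits s ((List.ofFn (fun i : Fin m =>
        A.cf k i (mstate A RO X k i)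
          (advAns n RO (A.qf k i (mstate A RO X k i)) q) j)).flatten)

/-- The `(t+1)`-st oracle query of machine `i` in round `k` of the run of `A` with
oracle `RO` on input `X`. -/
def mquery {n s q m : ℕ} {I : Type} (A : MPC n s q m I) (RO : Bits n → Bits n) (X : I)
    (k : ℕ) (i : Fin m) (t : ℕ) : Bits n :=
  advQ n RO (A.qf k i (mstate A RO X k i)) t
/-- `jkIdx … k` is the paper's `j_k`: the largest `j ∈ {1,…,w}` such that `e_j` was
queried by some machine before the beginning of round `k` (in rounds `< k`), and `1` if
no such `j` exists. -/
noncomputable def jkIdx (n u v W κ w s q m : ℕ) (A : MPC n s q m (Fin v → Bits u))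
    (RO : Bits n → Bits n) (X : Fin v → Bits u) (k : ℕ) : ℕ :=
  max (sSup {j : ℕ | 1 ≤ j ∧ j ≤ w ∧ ∃ k' < k, ∃ i : Fin m, ∃ t < q,
    mquery A RO X k' i t = lineE n u v W κ RO X (j - 1)}) 1

open Classical in
/-- The modified oracle `RO^{(k)}_{a_1,…,a_p}` (with `j0 = j_k − 1`, so that
`branchE … j0 a t` is the paper's `f_t`): it agrees with `RO` everywhere except that,
for `t < p`, its value at `f_t` is `RO(f_t)` with the first `κ` bits replaced by the
`κ`-bit encoding of the (0-based) pointer `a_{t+1}`. -/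
noncomputable def modRO (n u v W κ p : ℕ) (RO : Bits n → Bits n) (X : Fin v → Bits u)
    (j0 : ℕ) (a : ℕ → Fin v) : Bits n → Bits n := fun y =>
  if h : ∃ t, t < p ∧ branchE n u v W κ RO X j0 a t = y then
    fun b : Fin n =>
      if (b : ℕ) < κ then Nat.testBit ((a (Nat.find h + 1) : ℕ)) (b : ℕ) else RO y b
  else RO y

/-- The set `B_i^{(k)}` : all (0-based) indices `a₀ ∈ {1,…,v}` such that for some
sequence `g = (a_1,…,a_p)` and some `b ∈ {1,…,p}` with `a_b = a₀`, machine `i`, started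
in round `k` from its true-run state `M_i^{(k)}` but with its round-`k` queries answered
by the modified oracle `RO^{(k)}_{a_1,…,a_p}`, makes the query `f_b`. -/
noncomputable def Bset (n u v W κ p w s q m : ℕ) (A : MPC n s q m (Fin v → Bits u))
    (RO : Bits n → Bits n) (X : Fin v → Bits u) (k : ℕ) (i : Fin m) : Set (Fin v) :=
  {a0 | ∃ g : ℕ → Fin v, ∃ b, 1 ≤ b ∧ b ≤ p ∧ g b = a0 ∧ ∃ t < q,
    advQ n (modRO n u v W κ p RO X (jkIdx n u v W κ w s q m A RO X k - 1) g)
        (A.qf k i (mstate A RO X k i)) t =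
      branchE n u v W κ RO X (jkIdx n u v W κ w s q m A RO X k - 1) g b}

/-!
Fix the state `M` with which machine `i` enters round `k` and the index `j_k`; a union bound over
the `2 ^ s * w` possible pairs will pay for this. For injective `X`, rewrite every query so that an
`x`-field equal to a block `X a` is replaced by the label `a`. The rewriting is injective, so the
random oracle may be sampled as `Z ∘ encoding` with a uniform `Z` on rewritten queries. Once `Z` is
fixed, the chain, its branches and the modified oracles are the same for all `X` in rewritten form.
Hence a run of machine `i` is determined by `Z` up to the first moment it queries a block not seen
so far, and that query reveals the block: the block is one of at most `v ^ p * q` predictable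
strings, and its label one of `v`. Revealing `N` blocks in this way costs `N * u` bits of `X` and
leaves `(v ^ p * q * v) ^ N` possibilities.
-/

open scoped Finset

section UniformProbability

variable {Ω : Type} [Fintype Ω]

lemma unifProb_eq_card_div (P : Ω → Prop) [DecidablePred P] :
    unifProb P = #{ω | P ω} / Fintype.card Ω := by
  simp [unifProb, Set.ncard_eq_toFinset_card']

lemma unifProb_mono {P Q : Ω → Prop} (h : ∀ ω, P ω → Q ω) : unifProb P ≤ unifProb Q := by
  unfold unifProb
  gcongr
  exacts [Set.toFinite _, h _]

lemma unifProb_or_le (P Q : Ω → Prop) :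
    unifProb (fun ω => P ω ∨ Q ω) ≤ unifProb P + unifProb Q := by
  unfold unifProb
  rw [← add_div]
  gcongr
  exact_mod_cast Set.ncard_union_le {ω | P ω} {ω | Q ω}

lemma unifProb_exists_mem_le {ι : Type*} (s : Finset ι) (P : ι → Ω → Prop) {c : ℝ}
    (hP : ∀ i ∈ s, unifProb (P i) ≤ c) : unifProb (fun ω => ∃ i ∈ s, P i ω) ≤ #s * c := by
  classical
  have hunion : unifProb (fun ω => ∃ i ∈ s, P i ω) ≤ ∑ i ∈ s, unifProb (P i) := by
    simp only [unifProb_eq_card_div, ← Finset.sum_div]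
    gcongr
    have : ({ω | ∃ i ∈ s, P i ω} : Finset Ω) = s.biUnion fun i => {ω | P i ω} := by ext; simp
    rw [this]
    exact_mod_cast Finset.card_biUnion_le
  exact hunion.trans ((Finset.sum_le_card_nsmul s _ c hP).trans_eq (nsmul_eq_mul _ _))

lemma unifProb_comp_equiv {Ω' : Type} [Fintype Ω'] (e : Ω ≃ Ω') (P : Ω' → Prop) :
    unifProb (fun ω => P (e ω)) = unifProb P := by
  unfold unifProb
  rw [Fintype.card_congr e, ← Set.ncard_preimage_of_injective_subset_range e.injective
    (by simp [e.surjective.range_eq])]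
  rfl

variable {α β : Type} [Fintype α] [Fintype β]

lemma unifProb_prod (P : α → β → Prop) :
    unifProb (fun ω : α × β => P ω.1 ω.2) = (∑ a, unifProb (P a)) / Fintype.card α := by
  classical
  simp only [unifProb_eq_card_div, ← Finset.sum_div, Fintype.card_prod, Nat.cast_mul, div_div,
    Finset.card_filter, Fintype.sum_prod_type, Nat.cast_sum, mul_comm (Fintype.card β : ℝ)]

lemma unifProb_prod_swap (P : α → β → Prop) :
    unifProb (fun ω : α × β => P ω.1 ω.2) =
      (∑ b, unifProb fun a => P a b) / Fintype.card β := by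
  rw [← unifProb_prod fun b a => P a b]
  exact unifProb_comp_equiv (Equiv.prodComm α β) fun ω => P ω.2 ω.1

lemma unifProb_prod_le [Nonempty α] (P : α → β → Prop) {c : ℝ} (hP : ∀ a, unifProb (P a) ≤ c) :
    unifProb (fun ω : α × β => P ω.1 ω.2) ≤ c := by
  rw [unifProb_prod, div_le_iff₀ (by exact_mod_cast Fintype.card_pos), mul_comm, ← nsmul_eq_mul]
  exact Finset.sum_le_card_nsmul _ _ c fun a _ => hP a

lemma unifProb_fst [Nonempty β] (P : α → Prop) :
    unifProb (fun ω : α × β => P ω.1) = unifProb P := by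
  rw [unifProb_prod_swap fun a _ => P a]
  simp

lemma unifProb_pi {ι : Type} [Fintype ι] [DecidableEq ι] {β : ι → Type} [∀ i, Fintype (β i)]
    (P : ∀ i, β i → Prop) :
    unifProb (fun X : ∀ i, β i => ∀ i, P i (X i)) = ∏ i, unifProb (P i) := by
  classical
  have hpi : ({X | ∀ i, P i (X i)} : Finset (∀ i, β i)) =
      Fintype.piFinset fun i => {x | P i x} := by ext; simp
  simp only [unifProb_eq_card_div, hpi, Fintype.card_piFinset, Fintype.card_pi, Nat.cast_prod,
    Finset.prod_div_distrib]

end UniformProbability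

section RandomFunctions

variable {ι β : Type} [Fintype ι] [DecidableEq ι] [Fintype β] [Nonempty β]

lemma unifProb_eqOn (S : Finset ι) (Y : ι → β) :
    unifProb (fun X : ι → β => Set.EqOn X Y S) = (1 / Fintype.card β) ^ #S := by
  classical
  have hfactor (a : ι) : unifProb (fun x : β => a ∈ S → x = Y a) =
      if a ∈ S then (1 / Fintype.card β : ℝ) else 1 := by
    split_ifs with ha <;> simp [ha, unifProb]
  calc unifProb (fun X : ι → β => Set.EqOn X Y S)
      = ∏ a, unifProb fun x : β => a ∈ S → x = Y a := unifProb_pi fun a x => a ∈ S → x = Y a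
    _ = (1 / Fintype.card β) ^ #S := by simp [hfactor, Finset.prod_ite_mem]

lemma unifProb_apply_eq_apply_le {a b : ι} (hab : a ≠ b) :
    unifProb (fun X : ι → β => X a = X b) ≤ 1 / Fintype.card β := by
  have hβ : (Fintype.card β : ℝ) ≠ 0 := by exact_mod_cast Fintype.card_ne_zero
  calc unifProb (fun X : ι → β => X a = X b)
      ≤ unifProb fun X : ι → β => ∃ y ∈ Finset.univ,
          Set.EqOn X (fun _ => y) ({a, b} : Finset ι) := by
        refine unifProb_mono fun X hX => ⟨X b, Finset.mem_univ _, ?_⟩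
        simp [Set.EqOn, hX]
    _ ≤ #(Finset.univ : Finset β) * (1 / Fintype.card β) ^ #{a, b} :=
        unifProb_exists_mem_le _ _ fun y _ => (unifProb_eqOn _ _).le
    _ = 1 / Fintype.card β := by
        rw [Finset.card_pair hab, Finset.card_univ]
        field_simp

lemma unifProb_not_injective_le :
    unifProb (fun X : ι → β => ¬ Function.Injective X) ≤
      (Fintype.card ι : ℝ) ^ 2 / Fintype.card β := by
  calc unifProb (fun X : ι → β => ¬ Function.Injective X)
      ≤ unifProb fun X : ι → β => ∃ c ∈ (Finset.univ : Finset ι).offDiag, X c.1 = X c.2 := by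
        refine unifProb_mono fun X hX => ?_
        obtain ⟨a, b, hXab, hab⟩ := Function.not_injective_iff.mp hX
        exact ⟨(a, b), by simpa using hab, hXab⟩
    _ ≤ #(Finset.univ : Finset ι).offDiag * (1 / Fintype.card β) :=
        unifProb_exists_mem_le _ _ fun c hc =>
          unifProb_apply_eq_apply_le (Finset.mem_offDiag.mp hc).2.2
    _ ≤ (Fintype.card ι : ℝ) ^ 2 / Fintype.card β := by
        rw [mul_one_div]
        gcongr
        rw [Finset.offDiag_card, Finset.card_univ, sq]
        exact_mod_cast Nat.sub_le _ _

/-- Here `S` is the set of points where `X` is already known, with values `Y`, and `D S Y` lists the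
candidates for one further value of `X`. Each candidate is correct with probability `1 / card β`, so
every new point costs a factor `C / card β`. -/
theorem unifProb_le_of_predictor (good : (ι → β) → Prop) (H : (ι → β) → Finset ι)
    (D : Finset ι → (ι → β) → Finset (ι × β)) {C : ℕ} (hC : ∀ S Y, #(D S Y) ≤ C)
    (hD : ∀ (S : Finset ι) (X Y : ι → β), good X → Set.EqOn X Y S → ¬ H X ⊆ S →
      ∃ a ∉ S, (a, X a) ∈ D S Y)
    (N : ℕ) (S : Finset ι) (Y : ι → β) :
    unifProb (fun X => good X ∧ Set.EqOn X Y S ∧ N ≤ #(H X \ S)) ≤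
      (C / Fintype.card β) ^ N * (1 / Fintype.card β) ^ #S := by
  induction N generalizing S Y with
  | zero =>
    calc unifProb (fun X => good X ∧ Set.EqOn X Y S ∧ 0 ≤ #(H X \ S))
        ≤ unifProb fun X => Set.EqOn X Y S := unifProb_mono fun X hX => hX.2.1
      _ = (C / Fintype.card β) ^ 0 * (1 / Fintype.card β) ^ #S := by
        rw [unifProb_eqOn, pow_zero, one_mul]
  | succ N ih =>
    have hreveal (X) (hX : good X ∧ Set.EqOn X Y S ∧ N + 1 ≤ #(H X \ S)) :
        ∃ d ∈ {d ∈ D S Y | d.1 ∉ S}, good X ∧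
          Set.EqOn X (Function.update Y d.1 d.2) (insert d.1 S : Finset ι) ∧
          N ≤ #(H X \ insert d.1 S) := by
      obtain ⟨hgood, hXY, hN⟩ := hX
      have hunknown : ¬ H X ⊆ S := fun hHS => by
        simp [Finset.sdiff_eq_empty_iff_subset.mpr hHS] at hN
      obtain ⟨a, haS, haD⟩ := hD S X Y hgood hXY hunknown
      refine ⟨(a, X a), by simp [haD, haS], hgood, ?_, ?_⟩
      · intro b hb
        rcases eq_or_ne b a with rfl | hba
        · simp
        · simpa [hba] using hXY (Finset.mem_of_mem_insert_of_ne hb hba)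
      · rw [Finset.sdiff_insert]
        exact (Nat.le_sub_one_of_lt hN).trans Finset.pred_card_le_card_erase
    calc unifProb (fun X => good X ∧ Set.EqOn X Y S ∧ N + 1 ≤ #(H X \ S))
        ≤ #{d ∈ D S Y | d.1 ∉ S} *
            ((C / Fintype.card β) ^ N * (1 / Fintype.card β) ^ (#S + 1)) := by
          refine (unifProb_mono hreveal).trans (unifProb_exists_mem_le _ _ fun d hd => ?_)
          rw [← Finset.card_insert_of_notMem (Finset.mem_filter.mp hd).2]
          exact ih (insert d.1 S) (Function.update Y d.1 d.2)
      _ ≤ C * ((C / Fintype.card β) ^ N * (1 / Fintype.card β) ^ (#S + 1)) := by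
          gcongr
          exact (Finset.card_filter_le _ _).trans (hC S Y)
      _ = (C / Fintype.card β) ^ (N + 1) * (1 / Fintype.card β) ^ #S := by ring

lemma unifProb_comp_injective {σ : Type} [Fintype σ] [DecidableEq σ] {φ : ι → σ}
    (hφ : Function.Injective φ) (P : (ι → β) → Prop) :
    unifProb (fun Z : σ → β => P (Z ∘ φ)) = unifProb P := by
  classical
  let e : (σ → β) ≃ (ι → β) × ({y // y ∉ Set.range φ} → β) :=
    (Equiv.piEquivPiSubtypeProd (· ∈ Set.range φ) fun _ => β).trans
      (((Equiv.ofInjective φ hφ).symm.arrowCongr (Equiv.refl β)).prodCongr (Equiv.refl _))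
  have he (Z : σ → β) : (e Z).1 = Z ∘ φ := by
    ext x
    simp [e, Equiv.piEquivPiSubtypeProd]
  simp only [← he]
  rw [unifProb_comp_equiv e fun ω => P ω.1, unifProb_fst]

lemma unifProb_prod_le_of_encoding {σ ξ : Type} [Finite σ] [Fintype ξ]
    {φ : ξ → ι → σ} (hφ : ∀ X, Function.Injective (φ X)) (P : (ι → β) → ξ → Prop) {c : ℝ}
    (hP : ∀ Z : σ → β, unifProb (fun X => P (Z ∘ φ X) X) ≤ c) :
    unifProb (fun ω : (ι → β) × ξ => P ω.1 ω.2) ≤ c := by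
  classical
  have := Fintype.ofFinite σ
  calc unifProb (fun ω : (ι → β) × ξ => P ω.1 ω.2)
      = (∑ X, unifProb fun RO : ι → β => P RO X) / Fintype.card ξ := unifProb_prod_swap P
    _ = (∑ X, unifProb fun Z : σ → β => P (Z ∘ φ X) X) / Fintype.card ξ := by
        congr 1
        exact Finset.sum_congr rfl fun X _ =>
          (unifProb_comp_injective (hφ X) fun RO => P RO X).symm
    _ = unifProb fun ω : (σ → β) × ξ => P (ω.1 ∘ φ ω.2) ω.2 :=
        (unifProb_prod_swap fun (Z : σ → β) X => P (Z ∘ φ X) X).symm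
    _ ≤ c := unifProb_prod_le (fun (Z : σ → β) X => P (Z ∘ φ X) X) hP

end RandomFunctions

section BlockLabel

variable {ι β : Type*} {S : Set ι} {X Y : ι → β} {x : β}

open Classical in
/-- Replaces a value that `X` takes on `S` by a point of `S` where it is taken, and keeps all other
values. -/
noncomputable def blockLabel (S : Set ι) (X : ι → β) (x : β) : ι ⊕ β :=
  if h : x ∈ X '' S then Sum.inl h.choose else Sum.inr x

lemma blockLabel_injective (S : Set ι) (X : ι → β) : Function.Injective (blockLabel S X) := by
  intro x y hxy
  unfold blockLabel at hxy
  split_ifs at hxy with hx hy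
  · rw [← hx.choose_spec.2, ← hy.choose_spec.2, Sum.inl.inj hxy]
  · exact Sum.inr.inj hxy

lemma blockLabel_apply (hX : Set.InjOn X S) {a : ι} (ha : a ∈ S) :
    blockLabel S X (X a) = Sum.inl a := by
  have hmem : X a ∈ X '' S := Set.mem_image_of_mem X ha
  rw [blockLabel, dif_pos hmem, hX hmem.choose_spec.1 ha hmem.choose_spec.2]

lemma blockLabel_of_notMem (hx : x ∉ X '' S) : blockLabel S X x = Sum.inr x :=
  dif_neg hx

lemma blockLabel_univ_eq_of_eqOn (hX : Function.Injective X) (hXY : Set.EqOn X Y S)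
    (hx : ∀ a ∉ S, x ≠ X a) : blockLabel Set.univ X x = blockLabel S Y x := by
  by_cases hxS : x ∈ X '' S
  · obtain ⟨a, ha, rfl⟩ := hxS
    rw [blockLabel_apply hX.injOn (Set.mem_univ a), hXY ha,
      blockLabel_apply (hXY.injOn_iff.mp hX.injOn) ha]
  · have hxX : x ∉ X '' Set.univ := by
      rintro ⟨a, -, rfl⟩
      exact hx a (fun ha => hxS ⟨a, ha, rfl⟩) rfl
    have hxY : x ∉ Y '' S := hXY.image_eq ▸ hxS
    rw [blockLabel_of_notMem hxX, blockLabel_of_notMem hxY]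

end BlockLabel

section SymbolicQueries

variable {n u v W : ℕ}

/-- The `x`-field of a query `⟨i, x, ρ⟩`. -/
def xField (W u : ℕ) (y : Bits n) : Bits u := fun j => bitAt y (W + j)

/-- The query with its `x`-field set to zero. -/
def eraseXField (W u : ℕ) (y : Bits n) : Bits n := fun j =>
  if W ≤ (j : ℕ) ∧ (j : ℕ) < W + u then false else y j

lemma eq_of_xField_eq_of_eraseXField_eq {y z : Bits n} (hx : xField W u y = xField W u z)
    (herase : eraseXField W u y = eraseXField W u z) : y = z := by
  ext j
  by_cases hj : W ≤ (j : ℕ) ∧ (j : ℕ) < W + u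
  · have hpos : W + ((j : ℕ) - W) = j := by omega
    simpa [xField, bitAt, hpos] using congrFun hx ⟨j - W, by omega⟩
  · simpa [eraseXField, hj] using congrFun herase j

lemma xField_lineStr (hn : W + u ≤ n) (i : ℕ) (x ρ : Bits u) :
    xField W u (lineStr n W u i x ρ) = x := by
  ext j
  have hj : W + (j : ℕ) < n := by omega
  simp [xField, bitAt, lineStr, hj]

lemma eraseXField_lineStr (i : ℕ) (x ρ : Bits u) :
    eraseXField W u (lineStr n W u i x ρ) = lineStr n W u i (fun _ => false) ρ := by
  ext j
  by_cases hW : (j : ℕ) < W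
  · simp [eraseXField, lineStr, hW]
  · by_cases hu : (j : ℕ) < W + u <;> simp [eraseXField, lineStr, bitAt, hW, hu, not_lt.mp hW]

/-- Queries in symbolic form: the `x`-field is either a block label or a literal string, and the
second component is the query with its `x`-field erased. -/
abbrev SymQuery (n u v : ℕ) := (Fin v ⊕ Bits u) × Bits n

/-- The symbolic form of a query when the blocks of `X` with label in `S` are known. -/
noncomputable def symEncode (W : ℕ) (S : Set (Fin v)) (X : Fin v → Bits u) (y : Bits n) :
    SymQuery n u v :=
  (blockLabel S X (xField W u y), eraseXField W u y)

/-- The symbolic form of the query `⟨i, X a, ρ⟩`. -/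
def symLineStr (n W : ℕ) (i : ℕ) (a : Fin v) (ρ : Bits u) : SymQuery n u v :=
  (Sum.inl a, lineStr n W u i (fun _ => false) ρ)

lemma symEncode_injective (S : Set (Fin v)) (X : Fin v → Bits u) :
    Function.Injective (symEncode (n := n) W S X) := fun _ _ h =>
  eq_of_xField_eq_of_eraseXField_eq (blockLabel_injective S X (congrArg Prod.fst h))
    (congrArg Prod.snd h)

lemma symEncode_lineStr (hn : W + u ≤ n) {X : Fin v → Bits u} (hX : Function.Injective X) (i : ℕ)
    (a : Fin v) (ρ : Bits u) :
    symEncode W Set.univ X (lineStr n W u i (X a) ρ) = symLineStr n W i a ρ := by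
  rw [symEncode, xField_lineStr hn, eraseXField_lineStr,
    blockLabel_apply hX.injOn (Set.mem_univ a), symLineStr]

lemma symEncode_univ_eq_of_eqOn {S : Set (Fin v)} {X Y : Fin v → Bits u}
    (hX : Function.Injective X) (hXY : Set.EqOn X Y S) {y : Bits n}
    (hy : ∀ a ∉ S, xField W u y ≠ X a) : symEncode W Set.univ X y = symEncode W S Y y := by
  rw [symEncode, blockLabel_univ_eq_of_eqOn hX hXY hy, symEncode]

end SymbolicQueries

section HitBlocks

variable {n u v W : ℕ}

lemma advAns_congr {RO RO' : Bits n → Bits n} {f : List (Bits n) → Bits n} {t : ℕ}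
    (h : ∀ t' < t, RO (advQ n RO f t') = RO' (advQ n RO f t')) :
    advAns n RO f t = advAns n RO' f t := by
  induction t with
  | zero => rfl
  | succ t ih =>
    have hlast := h t t.lt_succ_self
    have hinit := ih fun t' ht' => h t' (ht'.trans t.lt_succ_self)
    unfold advQ at hlast
    rw [advAns, advAns, hlast, hinit]

/-- Up to its first query of a block outside `S`, a run against `X` coincides with the run in which
only the blocks in `S` are known. -/
lemma exists_xField_advQ_eq {S : Set (Fin v)} {X Y : Fin v → Bits u}
    (hX : Function.Injective X) (hXY : Set.EqOn X Y S) (Z : SymQuery n u v → Bits n)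
    (f : List (Bits n) → Bits n) {t₀ : ℕ}
    (hit : ∃ a ∉ S, xField W u (advQ n (Z ∘ symEncode W Set.univ X) f t₀) = X a) :
    ∃ t ≤ t₀, ∃ a ∉ S, xField W u (advQ n (Z ∘ symEncode W S Y) f t) = X a := by
  classical
  have hex : ∃ t, ∃ a ∉ S, xField W u (advQ n (Z ∘ symEncode W Set.univ X) f t) = X a := ⟨t₀, hit⟩
  obtain ⟨a, haS, hxa⟩ := Nat.find_spec hex
  refine ⟨Nat.find hex, Nat.find_min' hex hit, a, haS, ?_⟩
  have hrun : advAns n (Z ∘ symEncode W Set.univ X) f (Nat.find hex) =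
      advAns n (Z ∘ symEncode W S Y) f (Nat.find hex) := by
    refine advAns_congr fun t ht => congrArg Z (symEncode_univ_eq_of_eqOn hX hXY ?_)
    exact fun b hb hxb => Nat.find_min hex ht ⟨b, hb, hxb⟩
  rwa [advQ, ← hrun]

variable {G : Type}

open Classical in
/-- The blocks of `X` that occur as `x`-field of one of the first `q` queries of `f`, run against
one of the oracles `O g`. -/
noncomputable def hitBlocks (W q : ℕ) (f : List (Bits n) → Bits n) (O : G → Bits n → Bits n)
    (X : Fin v → Bits u) : Finset (Fin v) :=
  {a | ∃ g, ∃ t < q, xField W u (advQ n (O g) f t) = X a}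

lemma mem_hitBlocks {q : ℕ} {f : List (Bits n) → Bits n} {O : G → Bits n → Bits n}
    {X : Fin v → Bits u} {a : Fin v} :
    a ∈ hitBlocks W q f O X ↔ ∃ g, ∃ t < q, xField W u (advQ n (O g) f t) = X a := by
  simp [hitBlocks]

variable [Fintype G]

/-- The candidates `(a, x)` for `X a = x` obtained by running `f` with only the blocks in `S`
known, where `Y` holds their values. -/
noncomputable def blockGuesses (W q : ℕ) (f : List (Bits n) → Bits n)
    (O : G → SymQuery n u v → Bits n) (S : Finset (Fin v)) (Y : Fin v → Bits u) :
    Finset (Fin v × Bits u) :=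
  (Finset.univ ×ˢ Finset.range q ×ˢ Finset.univ).image fun (i : G × ℕ × Fin v) =>
    (i.2.2, xField W u (advQ n (O i.1 ∘ symEncode W S Y) f i.2.1))

lemma card_blockGuesses_le (W q : ℕ) (f : List (Bits n) → Bits n)
    (O : G → SymQuery n u v → Bits n) (S : Finset (Fin v)) (Y : Fin v → Bits u) :
    #(blockGuesses W q f O S Y) ≤ Fintype.card G * (q * v) :=
  Finset.card_image_le.trans_eq (by simp [Finset.card_univ])

lemma exists_mem_blockGuesses {q : ℕ} {f : List (Bits n) → Bits n}
    {O : G → SymQuery n u v → Bits n} {S : Finset (Fin v)} {X Y : Fin v → Bits u}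
    (hX : Function.Injective X) (hXY : Set.EqOn X Y S)
    (hhit : ¬ hitBlocks W q f (fun g => O g ∘ symEncode W Set.univ X) X ⊆ S) :
    ∃ a ∉ S, (a, X a) ∈ blockGuesses W q f O S Y := by
  obtain ⟨a₀, ha₀, ha₀S⟩ := Finset.not_subset.mp hhit
  obtain ⟨g, t₀, ht₀, hxa₀⟩ := mem_hitBlocks.mp ha₀
  obtain ⟨t, ht, a, haS, hxa⟩ := exists_xField_advQ_eq hX hXY (O g) f ⟨a₀, ha₀S, hxa₀⟩
  refine ⟨a, haS, Finset.mem_image.mpr ⟨(g, t, a), ?_, by rw [hxa]⟩⟩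
  simpa using ht.trans_lt ht₀

lemma unifProb_hitBlocks_le (q : ℕ) (f : List (Bits n) → Bits n)
    (O : G → SymQuery n u v → Bits n) (N : ℕ) :
    unifProb (fun X : Fin v → Bits u => Function.Injective X ∧
        N ≤ #(hitBlocks W q f (fun g => O g ∘ symEncode W Set.univ X) X)) ≤
      (Fintype.card G * (q * v) / 2 ^ u) ^ N := by
  simpa using unifProb_le_of_predictor Function.Injective
    (fun X => hitBlocks W q f (fun g => O g ∘ symEncode W Set.univ X) X) (blockGuesses W q f O)
    (card_blockGuesses_le W q f O) (fun _ _ _ => exists_mem_blockGuesses) N ∅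
    (fun _ _ => false)

end HitBlocks

section Reprogram

variable {σ τ : Type*} [DecidableEq σ] [DecidableEq τ] {n κ p : ℕ}

/-- The oracle `Z` with the first `κ` bits of its value at the point `f t` replaced by the encoding
of `a (t + 1)`, for all `t < p`; of several such `t` the least one counts. This is `modRO` for
queries in an arbitrary type. -/
def reprogram (κ p : ℕ) (Z : σ → Bits n) (f : ℕ → σ) (a : ℕ → ℕ) : σ → Bits n :=
  fun y =>
    if h : ∃ t, t < p ∧ f t = y then
      fun b => if (b : ℕ) < κ then Nat.testBit (a (Nat.find h + 1)) b else Z y b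
    else Z y

lemma reprogram_comp {φ : τ → σ} (hφ : Function.Injective φ) (Z : σ → Bits n) (f : ℕ → τ)
    (a : ℕ → ℕ) : reprogram κ p (Z ∘ φ) f a = reprogram κ p Z (φ ∘ f) a ∘ φ := by
  ext1 y
  have hiff (t : ℕ) : (t < p ∧ φ (f t) = φ y) ↔ (t < p ∧ f t = y) := by rw [hφ.eq_iff]
  simp only [reprogram, Function.comp_apply, hiff]

lemma reprogram_congr (Z : σ → Bits n) {f f' : ℕ → σ} {a a' : ℕ → ℕ}
    (hf : ∀ t < p, f t = f' t) (ha : ∀ t < p, a (t + 1) = a' (t + 1)) :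
    reprogram κ p Z f a = reprogram κ p Z f' a' := by
  ext1 y
  have hiff (t : ℕ) : (t < p ∧ f t = y) ↔ (t < p ∧ f' t = y) :=
    and_congr_right fun ht => by rw [hf t ht]
  simp only [reprogram, hiff]
  split_ifs with hex
  · rw [ha _ (Nat.find_spec hex).1]
  · rfl

end Reprogram

section SymbolicLine

variable {n u v W κ : ℕ} [NeZero v]

/-- `lineChain` for an oracle `Z` on symbolic queries. -/
def symLineChain (W κ : ℕ) (Z : SymQuery n u v → Bits n) : ℕ → ℕ × Bits u
  | 0 => (0, fun _ => false)
  | k + 1 =>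
    let c := symLineChain W κ Z k
    let z := Z (symLineStr n W (k + 1) (Fin.ofNat v c.1) c.2)
    (natOf z κ % v, fun j => bitAt z (κ + j))

/-- `branchE` for an oracle `Z` on symbolic queries. -/
def symBranchE (W κ : ℕ) (Z : SymQuery n u v → Bits n) (j : ℕ) (a : ℕ → Fin v) :
    ℕ → SymQuery n u v
  | 0 =>
    let c := symLineChain W κ Z j
    symLineStr n W (j + 1) (Fin.ofNat v c.1) c.2
  | c + 1 => symLineStr n W (j + c + 2) (a (c + 1))
      (fun t => bitAt (Z (symBranchE W κ Z j a c)) (κ + t))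

lemma getX_mod (X : Fin v → Bits u) (c : ℕ) : getX X (c % v) = X (Fin.ofNat v c) :=
  dif_pos (Nat.mod_lt c (NeZero.pos v))

variable {X : Fin v → Bits u}

lemma lineChain_comp_symEncode (hn : W + u ≤ n) (hX : Function.Injective X)
    (Z : SymQuery n u v → Bits n) (k : ℕ) :
    lineChain n u v W κ (Z ∘ symEncode W Set.univ X) X k = symLineChain W κ Z k := by
  induction k with
  | zero => rfl
  | succ k ih =>
    simp only [lineChain, symLineChain, Function.comp_apply, ih, getX_mod,
      symEncode_lineStr hn hX]

lemma symEncode_branchE (hn : W + u ≤ n) (hX : Function.Injective X)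
    (Z : SymQuery n u v → Bits n) (j : ℕ) (a : ℕ → Fin v) (c : ℕ) :
    symEncode W Set.univ X (branchE n u v W κ (Z ∘ symEncode W Set.univ X) X j a c) =
      symBranchE W κ Z j a c := by
  induction c with
  | zero =>
    simp only [branchE, lineE, symBranchE, lineChain_comp_symEncode hn hX, getX_mod,
      symEncode_lineStr hn hX]
  | succ c ih => simp only [branchE, symBranchE, symEncode_lineStr hn hX, Function.comp_apply, ih]

lemma modRO_comp_symEncode (hn : W + u ≤ n) (hX : Function.Injective X) (p : ℕ)
    (Z : SymQuery n u v → Bits n) (j : ℕ) (a : ℕ → Fin v) :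
    modRO n u v W κ p (Z ∘ symEncode W Set.univ X) X j a =
      reprogram κ p Z (symBranchE W κ Z j a) (fun t => a t) ∘ symEncode W Set.univ X := by
  calc modRO n u v W κ p (Z ∘ symEncode W Set.univ X) X j a
      = reprogram κ p (Z ∘ symEncode W Set.univ X)
          (branchE n u v W κ (Z ∘ symEncode W Set.univ X) X j a) (fun t => a t) := rfl
    _ = reprogram κ p Z (symBranchE W κ Z j a) (fun t => a t) ∘ symEncode W Set.univ X := by
        rw [reprogram_comp (symEncode_injective _ _)]
        congr 2
        exact funext (symEncode_branchE hn hX Z j a)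

end SymbolicLine

section BranchBlocks

variable {n u v W κ p : ℕ}

lemma branchE_congr (RO : Bits n → Bits n) (X : Fin v → Bits u) (j : ℕ) {a a' : ℕ → Fin v} {c : ℕ}
    (h : ∀ t < c, a (t + 1) = a' (t + 1)) :
    branchE n u v W κ RO X j a c = branchE n u v W κ RO X j a' c := by
  induction c with
  | zero => rfl
  | succ c ih =>
    rw [branchE, branchE, ih fun t ht => h t (ht.trans c.lt_succ_self), h c c.lt_succ_self]

lemma modRO_congr (RO : Bits n → Bits n) (X : Fin v → Bits u) (j : ℕ) {a a' : ℕ → Fin v}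
    (h : ∀ t < p, a (t + 1) = a' (t + 1)) :
    modRO n u v W κ p RO X j a = modRO n u v W κ p RO X j a' :=
  reprogram_congr (a := fun t => a t) (a' := fun t => a' t) RO
    (fun _ ht => branchE_congr RO X j fun t' ht' => h t' (ht'.trans ht))
    fun t ht => congrArg Fin.val (h t ht)

/-- The blocks `a_b` reached by the first `q` queries of `f` along a branch `a_1, …, a_p` from
`e_{j+1}`, each branch being presented by its modified oracle. The set `B_i^{(k)}` is the case
`j = j_k - 1` where `f` is the query function of machine `i` in the state `M_i^{(k)}`. -/
def branchBlocks (n u v W κ p q : ℕ) (RO : Bits n → Bits n) (X : Fin v → Bits u) (j : ℕ)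
    (f : List (Bits n) → Bits n) : Set (Fin v) :=
  {a₀ | ∃ a : ℕ → Fin v, ∃ b, 1 ≤ b ∧ b ≤ p ∧ a b = a₀ ∧ ∃ t < q,
    advQ n (modRO n u v W κ p RO X j a) f t = branchE n u v W κ RO X j a b}

variable [NeZero v]

/-- The sequence `a_1, …, a_p` as a function on `ℕ`, with value `0` elsewhere. -/
noncomputable def extendSeq (a : Fin p → Fin v) : ℕ → Fin v :=
  Function.extend (fun i : Fin p => (i : ℕ) + 1) a 0

lemma extendSeq_succ (a : Fin p → Fin v) {t : ℕ} (ht : t < p) :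
    extendSeq a (t + 1) = a ⟨t, ht⟩ :=
  Function.Injective.extend_apply (fun _ _ h => Fin.ext (Nat.succ_injective h)) a 0 ⟨t, ht⟩

lemma branchBlocks_subset_hitBlocks (hn : W + u ≤ n) {X : Fin v → Bits u}
    (hX : Function.Injective X) (q : ℕ) (Z : SymQuery n u v → Bits n) (j : ℕ)
    (f : List (Bits n) → Bits n) :
    branchBlocks n u v W κ p q (Z ∘ symEncode W Set.univ X) X j f ⊆
      hitBlocks W q f (fun a : Fin p → Fin v =>
        reprogram κ p Z (symBranchE W κ Z j (extendSeq a)) (fun t => extendSeq a t) ∘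
          symEncode W Set.univ X) X := by
  rintro _ ⟨a, b, hb, -, rfl, t, ht, hquery⟩
  obtain ⟨c, rfl⟩ := Nat.exists_eq_succ_of_ne_zero (Nat.one_le_iff_ne_zero.mp hb)
  let a' (i : Fin p) : Fin v := a (i + 1)
  have haa' (t : ℕ) (ht : t < p) : a (t + 1) = extendSeq a' (t + 1) := (extendSeq_succ a' ht).symm
  refine Finset.mem_coe.mpr (mem_hitBlocks.mpr ⟨a', t, ht, ?_⟩)
  rw [← modRO_comp_symEncode hn hX, ← modRO_congr _ X j haa', hquery, branchE, xField_lineStr hn]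

lemma unifProb_branchBlocks_le (hn : W + u ≤ n) (q j : ℕ) (f : List (Bits n) → Bits n) (N : ℕ) :
    unifProb (fun ω : (Bits n → Bits n) × (Fin v → Bits u) => Function.Injective ω.2 ∧
        N ≤ (branchBlocks n u v W κ p q ω.1 ω.2 j f).ncard) ≤
      ((v : ℝ) ^ (p + 1) * q / 2 ^ u) ^ N := by
  refine unifProb_prod_le_of_encoding (φ := symEncode W Set.univ) (symEncode_injective _)
    (fun RO X => Function.Injective X ∧ N ≤ (branchBlocks n u v W κ p q RO X j f).ncard)
    fun Z => ?_
  let O (a : Fin p → Fin v) : SymQuery n u v → Bits n :=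
    reprogram κ p Z (symBranchE W κ Z j (extendSeq a)) (fun t => extendSeq a t)
  calc unifProb (fun X : Fin v → Bits u => Function.Injective X ∧
        N ≤ (branchBlocks n u v W κ p q (Z ∘ symEncode W Set.univ X) X j f).ncard)
      ≤ unifProb fun X : Fin v → Bits u => Function.Injective X ∧
          N ≤ #(hitBlocks W q f (fun a => O a ∘ symEncode W Set.univ X) X) := by
        refine unifProb_mono fun X ⟨hX, hN⟩ => ⟨hX, hN.trans ?_⟩
        rw [← Set.ncard_coe_finset]
        exact Set.ncard_le_ncard (branchBlocks_subset_hitBlocks hn hX q Z j f)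
    _ ≤ (Fintype.card (Fin p → Fin v) * (q * v) / 2 ^ u) ^ N := unifProb_hitBlocks_le q f O N
    _ = ((v : ℝ) ^ (p + 1) * q / 2 ^ u) ^ N := by
        rw [Fintype.card_fun, Fintype.card_fin, Fintype.card_fin]
        push_cast
        ring

end BranchBlocks

section MPC

variable {n u v w κ p W s q m : ℕ}

lemma jkIdx_sub_one_lt (hw : 1 ≤ w) (A : MPC n s q m (Fin v → Bits u)) (RO : Bits n → Bits n)
    (X : Fin v → Bits u) (k : ℕ) : jkIdx n u v W κ w s q m A RO X k - 1 < w := by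
  have hle : jkIdx n u v W κ w s q m A RO X k ≤ w := max_le (csSup_le' fun _ hj => hj.2.1) hw
  omega

lemma unifProb_ncard_Bset_le (hw : 1 ≤ w) (hv : 1 ≤ v) (hn : W + u ≤ n)
    (A : MPC n s q m (Fin v → Bits u)) (i : Fin m) (k N : ℕ) :
    unifProb (fun ω : (Bits n → Bits n) × (Fin v → Bits u) =>
        N ≤ (Bset n u v W κ p w s q m A ω.1 ω.2 k i).ncard) ≤
      (v : ℝ) ^ 2 / 2 ^ u + 2 ^ s * w * ((v : ℝ) ^ (p + 1) * q / 2 ^ u) ^ N := by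
  have : NeZero v := ⟨by omega⟩
  let bad (c : Bits s × Fin w) (ω : (Bits n → Bits n) × (Fin v → Bits u)) : Prop :=
    Function.Injective ω.2 ∧ N ≤ (branchBlocks n u v W κ p q ω.1 ω.2 c.2 (A.qf k i c.1)).ncard
  have hcollision : unifProb (fun ω : (Bits n → Bits n) × (Fin v → Bits u) =>
      ¬ Function.Injective ω.2) ≤ (v : ℝ) ^ 2 / 2 ^ u := by
    refine unifProb_prod_le (fun _ X => ¬ Function.Injective X) fun _ => ?_
    simpa using unifProb_not_injective_le (ι := Fin v) (β := Bits u)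
  have hbad : unifProb (fun ω => ∃ c ∈ Finset.univ, bad c ω) ≤
      2 ^ s * w * ((v : ℝ) ^ (p + 1) * q / 2 ^ u) ^ N := by
    refine (unifProb_exists_mem_le _ bad fun c _ =>
      unifProb_branchBlocks_le hn q c.2 (A.qf k i c.1) N).trans_eq ?_
    simp [Finset.card_univ]
  refine (unifProb_mono fun ω hω => ?_).trans
    ((unifProb_or_le _ _).trans (add_le_add hcollision hbad))
  rw [or_iff_not_imp_left, not_not]
  exact fun hinj => ⟨(mstate A ω.1 ω.2 k i, ⟨_, jkIdx_sub_one_lt hw A ω.1 ω.2 k⟩),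
    Finset.mem_univ _, hinj, hω⟩

lemma two_rpow_neg_sub_logb {x y : ℝ} (hx : 0 < x) (hy : 0 < y) (u d : ℕ) :
    (2 : ℝ) ^ (-(u - d * Real.logb 2 x - Real.logb 2 y)) = x ^ d * y / 2 ^ u := by
  have hexp : -(u - d * Real.logb 2 x - Real.logb 2 y) =
      Real.logb 2 x * d + Real.logb 2 y - u := by ring
  rw [hexp, Real.rpow_sub two_pos, Real.rpow_add two_pos, Real.rpow_mul zero_le_two,
    Real.rpow_logb two_pos (by norm_num) hx, Real.rpow_logb two_pos (by norm_num) hy,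
    Real.rpow_natCast, Real.rpow_natCast]

lemma two_pow_mul_rpow_neg_pow_le {Δ : ℝ} (hΔ : 0 < Δ) {s N : ℕ} (hN : s / Δ + 1 ≤ N) :
    (2 : ℝ) ^ s * ((2 : ℝ) ^ (-Δ)) ^ N ≤ 2 ^ (-Δ) := by
  rw [← Real.rpow_natCast, ← Real.rpow_mul_natCast zero_le_two, ← Real.rpow_add two_pos]
  refine Real.rpow_le_rpow_of_exponent_le one_le_two ?_
  have hs : s + Δ ≤ N * Δ := by
    calc s + Δ = (s / Δ + 1) * Δ := by field_simp
      _ ≤ N * Δ := by gcongr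
  linarith

theorem stmt14_general (hw : 1 ≤ w) (hv : 1 ≤ v) (hq : 1 ≤ q) (hn : W + u ≤ n) {Δ : ℝ}
    (hΔ : Δ = u - ((p : ℝ) + 2) * Real.logb 2 v - Real.logb 2 q) (hΔpos : 0 < Δ)
    (A : MPC n s q m (Fin v → Bits u)) (i : Fin m) (k : ℕ) :
    unifProb (fun ω : (Bits n → Bits n) × (Fin v → Bits u) =>
        s / Δ + 1 < (Bset n u v W κ p w s q m A ω.1 ω.2 k i).ncard) ≤
      (w + 1) * (2 : ℝ) ^ (-Δ) := by
  have hv' : (1 : ℝ) ≤ v := by exact_mod_cast hv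
  have hq' : (1 : ℝ) ≤ q := by exact_mod_cast hq
  have hθ : (v : ℝ) ^ (p + 2) * q / 2 ^ u = 2 ^ (-Δ) := by
    rw [hΔ, ← two_rpow_neg_sub_logb (by linarith) (by linarith)]
    push_cast
    rfl
  let N := ⌈s / Δ + 1⌉₊
  calc unifProb (fun ω : (Bits n → Bits n) × (Fin v → Bits u) =>
        s / Δ + 1 < (Bset n u v W κ p w s q m A ω.1 ω.2 k i).ncard)
      ≤ unifProb fun ω : (Bits n → Bits n) × (Fin v → Bits u) =>
          N ≤ (Bset n u v W κ p w s q m A ω.1 ω.2 k i).ncard :=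
        unifProb_mono fun ω hω => Nat.ceil_le.mpr hω.le
    _ ≤ (v : ℝ) ^ 2 / 2 ^ u + 2 ^ s * w * ((v : ℝ) ^ (p + 1) * q / 2 ^ u) ^ N :=
        unifProb_ncard_Bset_le hw hv hn A i k N
    _ ≤ (v : ℝ) ^ (p + 2) * q / 2 ^ u + 2 ^ s * w * ((v : ℝ) ^ (p + 2) * q / 2 ^ u) ^ N := by
        gcongr ?_ / _ + _ * (?_ * _ / _) ^ _
        · exact (pow_le_pow_right₀ hv' (by omega)).trans
            (le_mul_of_one_le_right (by positivity) hq')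
        · exact pow_le_pow_right₀ hv' (by omega)
    _ = 2 ^ (-Δ) + w * (2 ^ s * ((2 : ℝ) ^ (-Δ)) ^ N) := by rw [hθ]; ring
    _ ≤ 2 ^ (-Δ) + w * 2 ^ (-Δ) := by
        gcongr
        exact two_pow_mul_rpow_neg_pow_le hΔpos (Nat.le_ceil _)
    _ = (w + 1) * (2 : ℝ) ^ (-Δ) := by ring

end MPC

/-- **Lemma 3.5 (up to an absolute constant `K`).**
In the Line setting with `u > (p+2)·log₂ v + log₂ q` and
`h := s/(u − (p+2)·log₂ v − log₂ q) + 1`, for every deterministic MPC algorithm, every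
machine `i` and every round `k ≥ 0`, the probability over uniformly random `(RO, X)`
that `|B_i^{(k)}| > h` while the event `E^{(k)}` does not occur is at most
`K·w·2^(−(u − (p+2)·log₂ v − log₂ q))`. -/
theorem stmt14 : ∃ K : ℝ, 0 < K ∧
    ∀ (n u v w κ p W s q m : ℕ),
    1 ≤ u → 2 ≤ w → 1 ≤ κ → v = 2 ^ κ →
    p = ⌈(Real.logb 2 w) ^ 2⌉₊ → W = Nat.clog 2 (w + p + 2) →
    W + 2 * u ≤ n → κ + u ≤ n → 1 ≤ q → 1 ≤ m →
    ((p : ℝ) + 2) * Real.logb 2 v + Real.logb 2 q < (u : ℝ) →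
    ∀ h : ℝ, h = (s : ℝ) / ((u : ℝ) - ((p : ℝ) + 2) * Real.logb 2 v - Real.logb 2 q) + 1 →
    ∀ (A : MPC n s q m (Fin v → Bits u)) (i : Fin m) (k : ℕ),
    unifProb (fun ω : (Bits n → Bits n) × (Fin v → Bits u) =>
      h < ((Bset n u v W κ p w s q m A ω.1 ω.2 k i).ncard : ℝ) ∧
      ¬ (∃ k2 ≤ k, ∃ i2 : Fin m, ∃ t2 < q, ∃ j, 1 ≤ j ∧ j ≤ w ∧ ∃ b ≤ p, ∃ a : ℕ → Fin v,
        mquery A ω.1 ω.2 k2 i2 t2 = branchE n u v W κ ω.1 ω.2 j a b ∧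
        ∀ (k1 : ℕ) (i1 : Fin m) (t1 : ℕ), k1 ≤ k → t1 < q →
          (k1 < k2 ∨ (k1 = k2 ∧ i1 = i2 ∧ t1 < t2)) →
          mquery A ω.1 ω.2 k1 i1 t1 ≠
            (if b = 0 then lineE n u v W κ ω.1 ω.2 (j - 1)
             else branchE n u v W κ ω.1 ω.2 j a (b - 1)))) ≤
    K * (w : ℝ) *
      (2 : ℝ) ^ (-((u : ℝ) - ((p : ℝ) + 2) * Real.logb 2 v - Real.logb 2 q)) := by
  refine ⟨2, two_pos, fun n u v w κ p W s q m _ hw _ hvκ _ _ hn _ hq _ hΔ h hh A i k => ?_⟩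
  subst hh
  have hw' : (2 : ℝ) ≤ w := by exact_mod_cast hw
  refine (unifProb_mono fun ω hω => hω.1).trans ((stmt14_general (by omega)
    (hvκ ▸ Nat.one_le_two_pow) hq (by omega) rfl (by linarith) A i k).trans ?_)
  gcongr
  linarith
end

section
/- There is an absolute constant K such that the following holds in the Line setting. Assume u > (p+2)·log₂ v + log₂ q and let h := s/(u − (p+2)·log₂ v − log₂ q) + 1. Fix a deterministic MPC algorithm with m machines, local memory s bits, and at most q oracle queries per machine per round, a machine i, and a round k ≥ 0. If the probability over uniformly random (RO, X) that |B_i^{(k)}| > h and E^{(k)} does not occur equals ε, then there exist a set F of pairs (RO, X) with |F| ≥ ε·2^(n·2^n + u·v) and an injective function Enc from F into binary strings such that, for every (RO, X) ∈ F, |Enc(RO, X)| ≤ n·2^n + s + h·((p+2)·log₂ v + log₂ q) + (v − h)·u + K·log₂ w. -/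
/-!
A pair `(RO, X)` with distinct blocks `x_a` is determined by `X`, by the values of `RO` at the
strings `⟨i, x_a, r⟩` as a function of `(i, a, r)`, and by `RO` on the remaining strings. In these
coordinates the Line chain, the branches and the modified oracles can be computed without knowing
the blocks, except for deciding whether a query names a given block. So a decoder that is told the
state of the machine, `j_k` and one branch for each of `H` blocks of `B_i^{(k)}` runs the `H`
simulations in parallel, and it does not need these `H` blocks either: the first query that names
such a block reveals it, and being told the place of that query costs less than the `u` bits of the
block.

With `R := v^(p+2) q 2^(-u)`, at most a fraction `2^s w R^H` of all pairs with distinct blocks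
therefore has `H` blocks in `B_i^{(k)}`, and at most a fraction `v² 2^(-u) ≤ R` has two equal
blocks. A set of at most `2^L` pairs has an injective encoding by strings of length `L`.
-/

namespace LineEncoding

section Counting

variable {ι J A B Y Z : Type*}

/-- Two pairs (oracle, input) are *index-equivalent* if the oracles cannot be told apart by queries
that name input blocks by their index: they agree on the query `addr (x_a) b` for all `a` and `b`,
each oracle using its own input, and on all strings that are such a query for neither pair. -/
structure IndexEquiv (addr : A → B → Y) (ω ω' : (Y → Z) × (ι → A)) : Prop where
  on_addr : ∀ a b, ω.1 (addr (ω.2 a) b) = ω'.1 (addr (ω'.2 a) b)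
  off_addr : ∀ y, (∀ a b, addr (ω.2 a) b ≠ y) → (∀ a b, addr (ω'.2 a) b ≠ y) → ω.1 y = ω'.1 y

theorem IndexEquiv.apply_eq {addr : A → B → Y} {ω ω' : (Y → Z) × (ι → A)}
    (h : IndexEquiv addr ω ω') {y : Y}
    (hy : ∀ a b, addr (ω.2 a) b = y ∨ addr (ω'.2 a) b = y → ω.2 a = ω'.2 a) :
    ω.1 y = ω'.1 y := by
  by_cases hon : ∃ a b, addr (ω.2 a) b = y ∨ addr (ω'.2 a) b = y
  · obtain ⟨a, b, hab⟩ := hon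
    have hX := hy a b hab
    have hy' : addr (ω'.2 a) b = y := by simpa only [hX, or_self] using hab
    simpa only [hX, hy'] using h.on_addr a b
  · push Not at hon
    exact h.off_addr y (fun a b => (hon a b).1) fun a b => (hon a b).2

theorem IndexEquiv.eq_of_input_eq {addr : A → B → Y} {ω ω' : (Y → Z) × (ι → A)}
    (h : IndexEquiv addr ω ω') (hX : ω.2 = ω'.2) : ω = ω' :=
  Prod.ext (funext fun _ => h.apply_eq fun a _ _ => congrFun hX a) hX

/-- Overwrite the oracle values at the index-named queries by `T` and the blocks with index in the
range of `a` by `β`, remembering the overwritten oracle values. -/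
noncomputable def overwrite (addr : A → B → Y) (a : J ↪ ι)
    (x : ((Y → Z) × (ι → A)) × (ι × B → Z) × (J → A)) :
    ((Y → Z) × (ι → A)) × (ι × B → Z) :=
  ((Function.extend (fun ab => addr (x.1.2 ab.1) ab.2) x.2.1 x.1.1,
    Function.extend a x.2.2 x.1.2), fun ab => x.1.1 (addr (x.1.2 ab.1) ab.2))

theorem indexEquiv_of_overwrite_eq {addr : A → B → Y} {a : J ↪ ι}
    {x x' : ((Y → Z) × (ι → A)) × (ι × B → Z) × (J → A)}
    (h : overwrite addr a x = overwrite addr a x') : IndexEquiv addr x.1 x'.1 where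
  on_addr c b := congrFun (congrArg Prod.snd h) (c, b)
  off_addr y hy hy' := by
    have hRO := congrFun (congrArg (fun z => z.1.1) h) y
    simp only [overwrite] at hRO
    rwa [Function.extend_apply' _ _ _ fun ⟨ab, hab⟩ => hy ab.1 ab.2 hab,
      Function.extend_apply' _ _ _ fun ⟨ab, hab⟩ => hy' ab.1 ab.2 hab] at hRO

theorem input_eq_of_overwrite_eq {addr : A → B → Y} {a : J ↪ ι}
    {x x' : ((Y → Z) × (ι → A)) × (ι × B → Z) × (J → A)}
    (h : overwrite addr a x = overwrite addr a x') {c : ι} (hc : c ∉ Set.range a) :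
    x.1.2 c = x'.1.2 c := by
  have hX := congrFun (congrArg (fun z => z.1.2) h) c
  simp only [overwrite] at hX
  rwa [Function.extend_apply' _ _ _ hc, Function.extend_apply' _ _ _ hc] at hX

theorem overwrite_right_injective {addr : A → B → Y} (haddr : Function.Injective2 addr)
    (a : J ↪ ι) {ω : (Y → Z) × (ι → A)} (hω : Function.Injective ω.2) :
    Function.Injective fun z : (ι × B → Z) × (J → A) => overwrite addr a (ω, z) := by
  intro z z' h
  have hinj : Function.Injective fun ab : ι × B => addr (ω.2 ab.1) ab.2 := fun _ _ hab =>
    Prod.ext (hω (haddr hab).1) (haddr hab).2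
  refine Prod.ext (funext fun ab => ?_) (funext fun l => ?_)
  · have hRO := congrFun (congrArg (fun z => z.1.1) h) (addr (ω.2 ab.1) ab.2)
    simp only [overwrite] at hRO
    rwa [hinj.extend_apply _ _ ab, hinj.extend_apply _ _ ab] at hRO
  · have hX := congrFun (congrArg (fun z => z.1.2) h) (a l)
    simp only [overwrite] at hX
    rwa [a.injective.extend_apply, a.injective.extend_apply] at hX

theorem ncard_mul_pow_le_of_determined [Finite J] [Finite A] [Finite B] [Finite Y] [Finite Z]
    [Finite ι] [Nonempty Z] {addr : A → B → Y} (haddr : Function.Injective2 addr) (a : J ↪ ι)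
    {S : Set ((Y → Z) × (ι → A))} (hS : ∀ ω ∈ S, Function.Injective ω.2)
    (hdet : ∀ ω ∈ S, ∀ ω' ∈ S, IndexEquiv addr ω ω' →
      (∀ c ∉ Set.range a, ω.2 c = ω'.2 c) → ω = ω') :
    S.ncard * Nat.card A ^ Nat.card J ≤ Nat.card ((Y → Z) × (ι → A)) := by
  have hinj : Function.Injective fun x : S × (ι × B → Z) × (J → A) =>
      overwrite addr a (x.1.1, x.2) := by
    rintro ⟨⟨ω, hω⟩, z⟩ ⟨⟨ω', hω'⟩, z'⟩ h
    obtain rfl : ω = ω' := hdet ω hω ω' hω' (indexEquiv_of_overwrite_eq h)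
      fun c hc => input_eq_of_overwrite_eq h hc
    obtain rfl : z = z' := overwrite_right_injective haddr a (hS ω hω) h
    rfl
  have hcard := Nat.card_le_card_of_injective _ hinj
  rw [Nat.card_prod S, Nat.card_prod (ι × B → Z), Nat.card_prod _ (ι × B → Z),
    Nat.card_coe_set_eq, Nat.card_fun (α := J), mul_left_comm, mul_comm] at hcard
  exact Nat.le_of_mul_le_mul_right hcard Nat.card_pos

theorem ncard_not_injective_mul_card_le [Finite ι] [Finite A] :
    {X : ι → A | ¬ Function.Injective X}.ncard * Nat.card A ≤
      Nat.card ι ^ 2 * Nat.card (ι → A) := by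
  classical
  have hcoll : ∀ X : {X : ι → A | ¬ Function.Injective X}, ∃ ab : ι × ι,
      X.1 ab.1 = X.1 ab.2 ∧ ab.1 ≠ ab.2 := fun ⟨X, hX⟩ => by
    simpa only [Function.Injective, not_forall, exists_prop, Prod.exists] using
      (show ¬ Function.Injective X from hX)
  choose coll hcoll hne using hcoll
  have hinj : Function.Injective fun x : {X : ι → A | ¬ Function.Injective X} × A =>
      (coll x.1, Function.update x.1.1 (coll x.1).1 x.2) := by
    rintro ⟨X, d⟩ ⟨X', d'⟩ h
    obtain ⟨hc, hu⟩ : coll X = coll X' ∧ Function.update X.1 (coll X).1 d =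
      Function.update X'.1 (coll X').1 d' := Prod.mk.inj h
    have hX : ∀ b, b ≠ (coll X).1 → X.1 b = X'.1 b := fun b hb => by
      simpa only [← hc, Function.update_of_ne hb] using congrFun hu b
    have hXX' : X = X' := Subtype.ext <| funext fun b => by
      by_cases hb : b = (coll X).1
      · rw [hb, hcoll X, hX _ (hne X).symm, hc, ← hcoll X']
      · exact hX b hb
    have hd : d = d' := by
      simpa only [hc, Function.update_self] using congrFun hu (coll X).1
    rw [hXX', hd]
  have hcard := Nat.card_le_card_of_injective _ hinj
  rwa [Nat.card_prod, Nat.card_prod, Nat.card_prod, Nat.card_coe_set_eq, ← sq] at hcard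

end Counting

section FirstHit

variable {J A : Type*}

/-- Among the parallel sequences `x i`, the value `b` is attained by `x i` at time `t`, and by none
of them earlier. -/
def FirstHit (x : J → ℕ → A) (b : A) (i : J) (t : ℕ) : Prop :=
  x i t = b ∧ ∀ t' < t, ∀ i', x i' t' ≠ b

theorem exists_firstHit {x : J → ℕ → A} {b : A} {i : J} {t : ℕ} (h : x i t = b) :
    ∃ i₀, ∃ t₀ ≤ t, FirstHit x b i₀ t₀ := by
  classical
  have hex : ∃ t, ∃ i, x i t = b := ⟨t, i, h⟩
  obtain ⟨i₀, hi₀⟩ := Nat.find_spec hex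
  exact ⟨i₀, Nat.find hex, Nat.find_min' hex ⟨i, h⟩, hi₀,
    fun t' ht' i' hi' => Nat.find_min hex ht' ⟨i', hi'⟩⟩

theorem FirstHit.le {x : J → ℕ → A} {b : A} {i i' : J} {t t' : ℕ} (h : FirstHit x b i t)
    (hx : x i' t' = b) : t ≤ t' :=
  not_lt.1 fun hlt => h.2 t' hlt i' hx

theorem apply_eq_of_firstHit {ι K : Type*} {x x' : J → ℕ → A} {X X' : ι → A} {a : K → ι}
    {i : K → J} {time : K → ℕ} (hx : ∀ l, FirstHit x (X (a l)) (i l) (time l))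
    (hx' : ∀ l, FirstHit x' (X' (a l)) (i l) (time l)) (hX : ∀ c ∉ Set.range a, X c = X' c)
    {t : ℕ} (heq : ∀ t' ≤ t, ∀ j, x j t' = x' j t') {j : J} {c : ι}
    (hc : x j t = X c ∨ x j t = X' c) : X c = X' c := by
  by_cases hca : c ∈ Set.range a
  · obtain ⟨l, rfl⟩ := hca
    have hle : time l ≤ t :=
      hc.elim (hx l).le fun h => (hx' l).le ((heq t le_rfl j).symm.trans h)
    rw [← (hx l).1, ← (hx' l).1, heq _ hle]
  · exact hX c hca

end FirstHit

section Encoding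

theorem card_bits (k : ℕ) : Nat.card (Bits k) = 2 ^ k := by
  rw [Nat.card_fun, Nat.card_eq_fintype_card, Fintype.card_bool, Nat.card_fin]

theorem exists_injOn_length_eq {α : Type*} {S : Set α} (hS : S.Finite) {k : ℕ}
    (hk : S.ncard ≤ 2 ^ k) :
    ∃ Enc : α → List Bool, Set.InjOn Enc S ∧ ∀ a, (Enc a).length = k := by
  have hcard : S.encard ≤ (Set.univ : Set (Bits k)).encard := by
    rw [← hS.cast_ncard_eq, Set.encard_univ, ENat.card_eq_coe_natCard, card_bits]
    exact_mod_cast hk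
  obtain ⟨f, -, hf⟩ := hS.exists_injOn_of_encard_le hcard
  exact ⟨fun a => List.ofFn (f a), List.ofFn_injective.comp_injOn hf, fun a => List.length_ofFn⟩

theorem exists_injOn_length_le {α : Type*} {S : Set α} (hS : S.Finite) {L : ℝ}
    (hL : (S.ncard : ℝ) ≤ 2 ^ (L - 1)) :
    ∃ Enc : α → List Bool, Set.InjOn Enc S ∧ ∀ a ∈ S, ((Enc a).length : ℝ) ≤ L := by
  have hfloor : (S.ncard : ℝ) ≤ 2 ^ ⌊L⌋₊ := hL.trans <| by
    rw [← Real.rpow_natCast]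
    exact Real.rpow_le_rpow_of_exponent_le one_le_two (Nat.sub_one_lt_floor L).le
  obtain ⟨Enc, hinj, hlen⟩ := exists_injOn_length_eq hS (k := ⌊L⌋₊) (mod_cast hfloor)
  refine ⟨Enc, hinj, fun a ha => ?_⟩
  have hone : (1 : ℝ) ≤ 2 ^ (L - 1) := le_trans (mod_cast (Set.ncard_pos hS).2 ⟨a, ha⟩) hL
  have hL₀ : 0 ≤ L - 1 :=
    (Real.rpow_le_rpow_left_iff one_lt_two).1 (by rwa [Real.rpow_zero])
  rw [hlen]
  exact Nat.floor_le (by linarith)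

end Encoding

section Numerics

theorem add_mul_rpow_le {s w δ h : ℝ} {H : ℕ} (hw : 2 ≤ w) (hδ : 0 < δ) (hh : h ≤ s / δ + 1)
    (hH : h ≤ H) :
    (2 : ℝ) ^ (-δ) + 2 ^ s * w * ((2 : ℝ) ^ (-δ)) ^ H ≤
      2 ^ (s - h * δ + 3 * Real.logb 2 w - 1) := by
  have hfirst : (2 : ℝ) ^ (-δ) ≤ 2 ^ (s - h * δ) := by
    refine Real.rpow_le_rpow_of_exponent_le one_le_two ?_
    have hhδ : (h - 1) * δ ≤ s := (le_div_iff₀ hδ).1 (by linarith)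
    linarith
  have hsecond : (2 : ℝ) ^ s * ((2 : ℝ) ^ (-δ)) ^ H ≤ 2 ^ (s - h * δ) := by
    rw [← Real.rpow_natCast, ← Real.rpow_mul two_pos.le, ← Real.rpow_add two_pos]
    refine Real.rpow_le_rpow_of_exponent_le one_le_two ?_
    nlinarith
  have hw₃ : (2 : ℝ) ^ (3 * Real.logb 2 w - 1) = w ^ 3 / 2 := by
    rw [Real.rpow_sub_one two_ne_zero, mul_comm, Real.rpow_mul two_pos.le,
      Real.rpow_logb two_pos one_lt_two.ne' (by linarith)]
    norm_cast
  have hcubic : 1 + w ≤ w ^ 3 / 2 := by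
    nlinarith [mul_nonneg (by linarith : (0 : ℝ) ≤ w) (mul_self_nonneg (w - 2))]
  calc (2 : ℝ) ^ (-δ) + 2 ^ s * w * ((2 : ℝ) ^ (-δ)) ^ H
      = (2 : ℝ) ^ (-δ) + w * (2 ^ s * ((2 : ℝ) ^ (-δ)) ^ H) := by ring
    _ ≤ 2 ^ (s - h * δ) + w * 2 ^ (s - h * δ) := by gcongr
    _ = 2 ^ (s - h * δ) * (1 + w) := by ring
    _ ≤ 2 ^ (s - h * δ) * (w ^ 3 / 2) := by gcongr
    _ = 2 ^ (s - h * δ + 3 * Real.logb 2 w - 1) := by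
        rw [← hw₃, ← Real.rpow_add two_pos, add_sub_assoc]

theorem mul_inv_two_pow_eq_rpow {v q : ℕ} (p u : ℕ) (hv : 1 ≤ v) (hq : 1 ≤ q) :
    (v : ℝ) ^ (p + 2) * q * (2 ^ u)⁻¹ =
      2 ^ (-((u : ℝ) - ((p : ℝ) + 2) * Real.logb 2 v - Real.logb 2 q)) := by
  have hv₀ : (0 : ℝ) < v := mod_cast hv
  have hq₀ : (0 : ℝ) < q := mod_cast hq
  rw [show -((u : ℝ) - (p + 2) * Real.logb 2 v - Real.logb 2 q) =
      Real.logb 2 v * (p + 2 : ℕ) + Real.logb 2 q + -(u : ℝ) by push_cast; ring,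
    Real.rpow_add two_pos, Real.rpow_add two_pos, Real.rpow_mul two_pos.le,
    Real.rpow_logb two_pos one_lt_two.ne' hv₀, Real.rpow_logb two_pos one_lt_two.ne' hq₀,
    Real.rpow_neg two_pos.le, Real.rpow_natCast, Real.rpow_natCast]

end Numerics

section Line

variable {n u v W κ p : ℕ}

/-- A pair (oracle, input) of the Line setting. -/
abbrev LineInstance (n u v : ℕ) := (Bits n → Bits n) × (Fin v → Bits u)

theorem card_lineInstance : Nat.card (LineInstance n u v) = 2 ^ (n * 2 ^ n + u * v) := by
  rw [Nat.card_prod, Nat.card_fun (α := Bits n), Nat.card_fun (α := Fin v), card_bits, card_bits,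
    Nat.card_fin, pow_add, pow_mul, pow_mul]

/-- The block `x` of a string `⟨i, x, ρ⟩`. -/
def inputBlock (W u : ℕ) {n : ℕ} (y : Bits n) : Bits u := fun t => bitAt y (W + t)

/-- The string `⟨i, x, ρ⟩` for an index `i` of at most `W` bits, as a function of the block `x` and
of the remaining parts `(i, ρ)`. -/
def lineAddr (n W u : ℕ) (x : Bits u) (b : Fin (2 ^ W) × Bits u) : Bits n :=
  lineStr n W u b.1 x b.2

theorem inputBlock_lineStr (hn : W + u ≤ n) (i : ℕ) (x ρ : Bits u) :
    inputBlock W u (lineStr n W u i x ρ) = x := by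
  funext ⟨t, ht⟩
  have htn : W + t < n := by omega
  simp [inputBlock, bitAt, lineStr, ht, htn]

theorem bitAt_lineStr_tag (hn : W + u ≤ n) {i j : ℕ} (hj : j < W) (x ρ : Bits u) :
    bitAt (lineStr n W u i x ρ) j = i.testBit j := by
  have hjn : j < n := by omega
  simp [bitAt, lineStr, hj, hjn]

theorem bitAt_lineStr_suffix (hn : W + 2 * u ≤ n) (i : ℕ) (x ρ : Bits u) (t : Fin u) :
    bitAt (lineStr n W u i x ρ) (W + u + t) = ρ t := by
  obtain ⟨t, ht⟩ := t
  have htn : W + u + t < n := by omega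
  have h₁ : ¬ W + u + t < W := by omega
  have h₂ : W + u + t < W + 2 * u := by omega
  have h₃ : W + u + t - W - u = t := by omega
  simp [bitAt, lineStr, ht, htn, h₁, h₂, h₃]

theorem lineAddr_injective2 (hn : W + 2 * u ≤ n) : Function.Injective2 (lineAddr n W u) := by
  rintro x x' ⟨i, ρ⟩ ⟨i', ρ'⟩ h
  have hn' : W + u ≤ n := by omega
  have hx : x = x' := by
    simpa only [lineAddr, inputBlock_lineStr hn'] using congrArg (inputBlock W u) h
  have hρ : ρ = ρ' := funext fun t => by
    simpa only [lineAddr, bitAt_lineStr_suffix hn] using congrArg (bitAt · (W + u + t)) h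
  have hi : (i : ℕ) = i' := Nat.eq_of_testBit_eq fun j => by
    rcases lt_or_ge j W with hj | hj
    · simpa only [lineAddr, bitAt_lineStr_tag hn' hj] using congrArg (bitAt · j) h
    · have hbits : ∀ a : Fin (2 ^ W), (a : ℕ).testBit j = false := fun a =>
        Nat.testBit_lt_two_pow (a.2.trans_le (Nat.pow_le_pow_right two_pos hj))
      rw [hbits, hbits]
  exact ⟨hx, Prod.ext (Fin.ext hi) hρ⟩

theorem getX_mod [NeZero v] (X : Fin v → Bits u) (i : ℕ) : getX X (i % v) = X (Fin.ofNat v i) :=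
  dif_pos (Nat.mod_lt i (NeZero.pos v))

theorem lineE_eq_lineStr [NeZero v] (ω : LineInstance n u v) (k : ℕ) :
    lineE n u v W κ ω.1 ω.2 k =
      lineStr n W u (k + 1) (ω.2 (Fin.ofNat v (lineChain n u v W κ ω.1 ω.2 k).1))
        (lineChain n u v W κ ω.1 ω.2 k).2 := by
  rw [lineE, getX_mod]

section IndexEquiv

variable {ω ω' : LineInstance n u v}

theorem IndexEquiv.apply_lineStr (h : IndexEquiv (lineAddr n W u) ω ω') {i : ℕ} (hi : i < 2 ^ W)
    (l : Fin v) (ρ : Bits u) :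
    ω.1 (lineStr n W u i (ω.2 l) ρ) = ω'.1 (lineStr n W u i (ω'.2 l) ρ) :=
  h.on_addr l (⟨i, hi⟩, ρ)

theorem IndexEquiv.lineChain_eq [NeZero v] (h : IndexEquiv (lineAddr n W u) ω ω') :
    ∀ {k : ℕ}, k < 2 ^ W → lineChain n u v W κ ω.1 ω.2 k = lineChain n u v W κ ω'.1 ω'.2 k
  | 0, _ => rfl
  | k + 1, hk => by
    have hRO : ω.1 (lineE n u v W κ ω.1 ω.2 k) = ω'.1 (lineE n u v W κ ω'.1 ω'.2 k) := by
      rw [lineE_eq_lineStr, lineE_eq_lineStr, h.lineChain_eq (Nat.lt_of_succ_lt hk),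
        h.apply_lineStr hk]
    exact Prod.ext (congrArg (natOf · κ % v) hRO)
      (congrArg (fun y (j : Fin u) => bitAt y (κ + j)) hRO)

theorem IndexEquiv.exists_branchE_eq_lineStr [NeZero v] (h : IndexEquiv (lineAddr n W u) ω ω')
    (j : ℕ) (a : ℕ → Fin v) : ∀ {c : ℕ}, j + c < 2 ^ W → ∃ l ρ,
      branchE n u v W κ ω.1 ω.2 j a c = lineStr n W u (j + c + 1) (ω.2 l) ρ ∧
      branchE n u v W κ ω'.1 ω'.2 j a c = lineStr n W u (j + c + 1) (ω'.2 l) ρ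
  | 0, hj => ⟨_, _, lineE_eq_lineStr ω j, h.lineChain_eq hj ▸ lineE_eq_lineStr ω' j⟩
  | c + 1, hc => by
    obtain ⟨l, ρ, hω, hω'⟩ := h.exists_branchE_eq_lineStr j a (Nat.lt_of_succ_lt hc)
    have hRO : ω'.1 (branchE n u v W κ ω'.1 ω'.2 j a c) =
        ω.1 (branchE n u v W κ ω.1 ω.2 j a c) := by
      rw [hω, hω']
      exact (h.apply_lineStr hc l ρ).symm
    exact ⟨a (c + 1), _, rfl, congrArg (fun y => lineStr n W u (j + c + 2) (ω'.2 (a (c + 1)))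
      fun t : Fin u => bitAt y (κ + t)) hRO⟩

end IndexEquiv

theorem branchE_congr (RO : Bits n → Bits n) (X : Fin v → Bits u) (j : ℕ) {a a' : ℕ → Fin v} :
    ∀ {c : ℕ}, (∀ t < c, a (t + 1) = a' (t + 1)) →
      branchE n u v W κ RO X j a c = branchE n u v W κ RO X j a' c
  | 0, _ => rfl
  | c + 1, h => by
    rw [branchE, branchE, h c c.lt_succ_self,
      branchE_congr RO X j fun t ht => h t (ht.trans c.lt_succ_self)]

theorem modRO_congr {ω ω' : LineInstance n u v} {j : ℕ} {a a' : ℕ → Fin v} {y : Bits n}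
    (hRO : ω.1 y = ω'.1 y) (ha : ∀ t < p, a (t + 1) = a' (t + 1))
    (hbranch : ∀ t < p, branchE n u v W κ ω.1 ω.2 j a t = y ↔
      branchE n u v W κ ω'.1 ω'.2 j a' t = y) :
    modRO n u v W κ p ω.1 ω.2 j a y = modRO n u v W κ p ω'.1 ω'.2 j a' y := by
  have hiff : ∀ {t}, t < p ∧ branchE n u v W κ ω.1 ω.2 j a t = y ↔
      t < p ∧ branchE n u v W κ ω'.1 ω'.2 j a' t = y := and_congr_right (hbranch _)
  by_cases hy : ∃ t, t < p ∧ branchE n u v W κ ω.1 ω.2 j a t = y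
  · have hy' := hy.imp fun _ => hiff.1
    have hfind : Nat.find hy = Nat.find hy' := Nat.find_congr' hiff
    have hlt : Nat.find hy' < p := (Nat.find_spec hy').1
    simp only [modRO]
    rw [dif_pos hy, dif_pos hy', hfind, ha _ hlt, hRO]
  · have hy' := mt (Exists.imp fun _ => hiff.2) hy
    rw [modRO, modRO, dif_neg hy, dif_neg hy', hRO]

theorem modRO_congr_path (ω : LineInstance n u v) (j : ℕ) {a a' : ℕ → Fin v}
    (ha : ∀ t < p, a (t + 1) = a' (t + 1)) :
    modRO n u v W κ p ω.1 ω.2 j a = modRO n u v W κ p ω.1 ω.2 j a' :=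
  funext fun _ => modRO_congr rfl ha fun _ ht => by
    rw [branchE_congr ω.1 ω.2 j fun t' ht' => ha t' (ht'.trans ht)]

theorem IndexEquiv.modRO_apply_eq [NeZero v] {ω ω' : LineInstance n u v}
    (h : IndexEquiv (lineAddr n W u) ω ω') (hn : W + u ≤ n) {j : ℕ} (hj : j + p ≤ 2 ^ W)
    (a : ℕ → Fin v) {y : Bits n}
    (hy : ∀ l, inputBlock W u y = ω.2 l ∨ inputBlock W u y = ω'.2 l → ω.2 l = ω'.2 l) :
    modRO n u v W κ p ω.1 ω.2 j a y = modRO n u v W κ p ω'.1 ω'.2 j a y := by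
  have hblock : ∀ i l ρ, lineStr n W u i (ω.2 l) ρ = y ∨ lineStr n W u i (ω'.2 l) ρ = y →
      ω.2 l = ω'.2 l := by
    rintro i l ρ (rfl | rfl)
    · exact hy l (.inl (inputBlock_lineStr hn i _ ρ))
    · exact hy l (.inr (inputBlock_lineStr hn i _ ρ))
  refine modRO_congr (h.apply_eq fun l b => hblock b.1 l b.2) (fun _ _ => rfl) fun t ht => ?_
  obtain ⟨l, ρ, hω, hω'⟩ := h.exists_branchE_eq_lineStr (κ := κ) j a (c := t) (by omega)
  rw [hω, hω']
  exact ⟨fun e => hblock _ l ρ (.inl e) ▸ e, fun e => (hblock _ l ρ (.inr e)).symm ▸ e⟩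

end Line

section Simulation

variable {J K : Type*} {n u v W κ p w s q m H : ℕ} {qf : Bits s → List (Bits n) → Bits n}

/-- The sequence of pointers with `a_{t+1} = g t` for `t < p`, which is what `modRO` reads. -/
def padPath [NeZero v] (g : Fin p → Fin v) (c : ℕ) : Fin v :=
  if h : c - 1 < p then g ⟨c - 1, h⟩ else 0

theorem padPath_succ [NeZero v] (a : ℕ → Fin v) {t : ℕ} (ht : t < p) :
    padPath (fun c : Fin p => a (c + 1)) (t + 1) = a (t + 1) :=
  dif_pos ht

/-- The input block named by the `t`-th query of the machine `f` when its queries are answered by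
the oracle modified along the `i`-th branch. -/
noncomputable def readBlock [NeZero v] (W κ : ℕ) (f : List (Bits n) → Bits n) (j : ℕ)
    (path : J → Fin p → Fin v) (ω : LineInstance n u v) (i : J) (t : ℕ) : Bits u :=
  inputBlock W u (advQ n (modRO n u v W κ p ω.1 ω.2 j (padPath (path i))) f t)

theorem IndexEquiv.readBlock_eq [NeZero v] (hn : W + u ≤ n) {j : ℕ} (hj : j + p ≤ 2 ^ W)
    {f : List (Bits n) → Bits n} {path : J → Fin p → Fin v} {ω ω' : LineInstance n u v}
    (h : IndexEquiv (lineAddr n W u) ω ω') {a : K → Fin v} {sim : K → J} {time : K → ℕ}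
    (hω : ∀ l, FirstHit (readBlock W κ f j path ω) (ω.2 (a l)) (sim l) (time l))
    (hω' : ∀ l, FirstHit (readBlock W κ f j path ω') (ω'.2 (a l)) (sim l) (time l))
    (hX : ∀ c ∉ Set.range a, ω.2 c = ω'.2 c) (i : J) (t : ℕ) :
    readBlock W κ f j path ω i t = readBlock W κ f j path ω' i t := by
  suffices hans : ∀ t i, advAns n (modRO n u v W κ p ω.1 ω.2 j (padPath (path i))) f t =
      advAns n (modRO n u v W κ p ω'.1 ω'.2 j (padPath (path i))) f t from
    congrArg (inputBlock W u ∘ f) (hans t i)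
  intro t
  induction t using Nat.strong_induction_on with
  | _ t ih =>
    rcases t with _ | t
    · exact fun _ => rfl
    · intro i
      have hread : ∀ t' ≤ t, ∀ i',
          readBlock W κ f j path ω i' t' = readBlock W κ f j path ω' i' t' := fun t' ht' i' =>
        congrArg (inputBlock W u ∘ f) (ih t' (Nat.lt_succ_of_le ht') i')
      rw [advAns, advAns, ← ih t t.lt_succ_self i, h.modRO_apply_eq hn hj]
      exact fun l hl => apply_eq_of_firstHit hω hω' hX hread (j := i) hl

/-- The advice from which a decoder that sees the input blocks only through their indices runs `H`
parallel simulations of one round of a machine: the state of the machine, the number `j_k - 1` of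
the last known Line entry and a branch for each simulation, together with `H` blocks and for each
of them a simulation and the time of a query there. -/
structure Advice (v w p s q H : ℕ) where
  state : Bits s
  last : Fin w
  path : Fin H → Fin p → Fin v
  block : Fin H ↪ Fin v
  sim : Fin H → Fin H
  time : Fin H → Fin q

/-- The components of an advice, which make advices a finite type. -/
def Advice.toProd (α : Advice v w p s q H) : Bits s × Fin w × (Fin H → Fin p → Fin v) ×
    (Fin H ↪ Fin v) × (Fin H → Fin H) × (Fin H → Fin q) :=
  (α.state, α.last, α.path, α.block, α.sim, α.time)

theorem Advice.toProd_injective :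
    Function.Injective (Advice.toProd : Advice v w p s q H → _) := by
  rintro ⟨⟩ ⟨⟩ h
  simpa only [toProd, Prod.mk.injEq, mk.injEq] using h

noncomputable instance : Fintype (Advice v w p s q H) :=
  Fintype.ofInjective _ Advice.toProd_injective

/-- The advice is valid for `ω` if it points, for each of its blocks, to the first query of the
parallel simulations that names this block. -/
def Advice.Valid [NeZero v] (W κ : ℕ) (qf : Bits s → List (Bits n) → Bits n)
    (α : Advice v w p s q H) (ω : LineInstance n u v) : Prop :=
  ∀ l, FirstHit (readBlock W κ (qf α.state) α.last α.path ω) (ω.2 (α.block l)) (α.sim l)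
    (α.time l)

theorem Advice.Valid.eq_of_indexEquiv [NeZero v] (hn : W + u ≤ n) (hW : w + p ≤ 2 ^ W)
    {α : Advice v w p s q H} {ω ω' : LineInstance n u v} (hω : α.Valid W κ qf ω)
    (hω' : α.Valid W κ qf ω') (h : IndexEquiv (lineAddr n W u) ω ω')
    (hX : ∀ c ∉ Set.range α.block, ω.2 c = ω'.2 c) : ω = ω' := by
  refine h.eq_of_input_eq (funext fun c => ?_)
  by_cases hc : c ∈ Set.range α.block
  · obtain ⟨l, rfl⟩ := hc
    rw [← (hω l).1, ← (hω' l).1, h.readBlock_eq hn (by omega) hω hω' hX]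
  · exact hX c hc

theorem Advice.ncard_valid_mul_pow_le [NeZero v] (hn : W + 2 * u ≤ n) (hW : w + p ≤ 2 ^ W)
    (α : Advice v w p s q H) :
    {ω : LineInstance n u v | Function.Injective ω.2 ∧ α.Valid W κ qf ω}.ncard * (2 ^ u) ^ H ≤
      Nat.card (LineInstance n u v) := by
  have hcard := ncard_mul_pow_le_of_determined (lineAddr_injective2 hn) α.block
    (S := {ω : LineInstance n u v | Function.Injective ω.2 ∧ α.Valid W κ qf ω}) (fun _ hω => hω.1)
    fun _ hω _ hω' => hω.2.eq_of_indexEquiv (by omega) hW hω'.2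
  rwa [card_bits, Nat.card_fin] at hcard

theorem Advice.card_le :
    Fintype.card (Advice v w p s q H) ≤ 2 ^ s * w * (v ^ (p + 2) * q) ^ H := by
  have hblocks : v.descFactorial H * H ^ H ≤ v ^ H * v ^ H := by
    rcases le_or_gt H v with hH | hH
    · gcongr
      exact Nat.descFactorial_le_pow v H
    · simp [Nat.descFactorial_eq_zero_iff_lt.2 hH]
  calc Fintype.card (Advice v w p s q H)
      ≤ 2 ^ s * w * (((v ^ p) ^ H * q ^ H) * (v.descFactorial H * H ^ H)) := by
        refine (Fintype.card_le_of_injective _ toProd_injective).trans_eq ?_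
        simp only [Fintype.card_prod, Fintype.card_fun, Fintype.card_fin, Fintype.card_bool,
          Fintype.card_embedding_eq]
        ring
    _ ≤ 2 ^ s * w * (((v ^ p) ^ H * q ^ H) * (v ^ H * v ^ H)) := by gcongr
    _ = 2 ^ s * w * (v ^ (p + 2) * q) ^ H := by ring

theorem jkIdx_sub_one_lt (hw : 1 ≤ w) (A : MPC n s q m (Fin v → Bits u)) (RO : Bits n → Bits n)
    (X : Fin v → Bits u) (k : ℕ) : jkIdx n u v W κ w s q m A RO X k - 1 < w := by
  have hle : jkIdx n u v W κ w s q m A RO X k ≤ w :=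
    max_le (csSup_le' fun _ hj => hj.2.1) hw
  omega

variable {A : MPC n s q m (Fin v → Bits u)} {ω : LineInstance n u v} {k : ℕ} {i : Fin m}

theorem exists_read_of_mem_Bset [NeZero v] (hn : W + u ≤ n) {b : Fin v}
    (hb : b ∈ Bset n u v W κ p w s q m A ω.1 ω.2 k i) :
    ∃ g : Fin p → Fin v, ∃ t < q, inputBlock W u
      (advQ n (modRO n u v W κ p ω.1 ω.2 (jkIdx n u v W κ w s q m A ω.1 ω.2 k - 1) (padPath g))
        (A.qf k i (mstate A ω.1 ω.2 k i)) t) = ω.2 b := by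
  obtain ⟨a, c, hc, -, rfl, t, ht, hquery⟩ := hb
  obtain ⟨c, rfl⟩ := Nat.exists_eq_add_of_le' hc
  refine ⟨fun c => a (c + 1), t, ht, ?_⟩
  rw [modRO_congr_path ω _ fun _ => padPath_succ a, hquery, branchE, inputBlock_lineStr hn]

theorem exists_advice_valid [NeZero v] (hn : W + u ≤ n) (hw : 1 ≤ w)
    (hH : H ≤ (Bset n u v W κ p w s q m A ω.1 ω.2 k i).ncard) :
    ∃ α : Advice v w p s q H, α.Valid W κ (A.qf k i) ω := by
  classical
  obtain ⟨e⟩ : Nonempty (Fin H ↪ Bset n u v W κ p w s q m A ω.1 ω.2 k i) :=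
    Function.Embedding.nonempty_of_card_le <| by
      rwa [Fintype.card_fin, ← Nat.card_eq_fintype_card, Nat.card_coe_set_eq]
  choose g t ht hread using fun l => exists_read_of_mem_Bset hn (e l).2
  choose sim time hle hfirst using fun l => exists_firstHit
    (x := readBlock W κ (A.qf k i (mstate A ω.1 ω.2 k i))
      (jkIdx n u v W κ w s q m A ω.1 ω.2 k - 1) g ω) (hread l)
  exact ⟨⟨mstate A ω.1 ω.2 k i, ⟨_, jkIdx_sub_one_lt hw A ω.1 ω.2 k⟩, g,
    e.trans (Function.Embedding.subtype _), sim, fun l => ⟨time l, (hle l).trans_lt (ht l)⟩⟩,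
    hfirst⟩

end Simulation

section UnionBound

variable {n u v W κ p w s q m : ℕ}

theorem ncard_input_not_injective_le :
    ({ω : LineInstance n u v | ¬ Function.Injective ω.2}.ncard : ℝ) ≤
      2 ^ (n * 2 ^ n + u * v) * (v ^ 2 * (2 ^ u)⁻¹) := by
  have hprod : {ω : LineInstance n u v | ¬ Function.Injective ω.2} =
      Set.univ ×ˢ {X | ¬ Function.Injective X} := by
    ext; simp
  have hX := ncard_not_injective_mul_card_le (ι := Fin v) (A := Bits u)
  rw [card_bits, Nat.card_fin] at hX
  rw [← mul_assoc, ← div_eq_mul_inv, le_div_iff₀ (by positivity)]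
  norm_cast
  calc _ = Nat.card (Bits n → Bits n) *
        ({X : Fin v → Bits u | ¬ Function.Injective X}.ncard * 2 ^ u) := by
        rw [hprod, Set.ncard_prod, Set.ncard_univ, mul_assoc]
    _ ≤ Nat.card (Bits n → Bits n) * (v ^ 2 * Nat.card (Fin v → Bits u)) := by gcongr
    _ = 2 ^ (n * 2 ^ n + u * v) * v ^ 2 := by
        rw [← card_lineInstance, Nat.card_prod]
        ring

theorem Advice.ncard_valid_le [NeZero v] (hn : W + 2 * u ≤ n) (hW : w + p ≤ 2 ^ W) {H : ℕ}
    (qf : Bits s → List (Bits n) → Bits n) (α : Advice v w p s q H) :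
    ({ω : LineInstance n u v | Function.Injective ω.2 ∧ α.Valid W κ qf ω}.ncard : ℝ) ≤
      2 ^ (n * 2 ^ n + u * v) * ((2 ^ u)⁻¹) ^ H := by
  rw [inv_pow, ← div_eq_mul_inv, le_div_iff₀ (by positivity)]
  exact_mod_cast (α.ncard_valid_mul_pow_le hn hW).trans_eq card_lineInstance

theorem ncard_le_ncard_Bset_le [NeZero v] (hw : 1 ≤ w) (hn : W + 2 * u ≤ n) (hW : w + p ≤ 2 ^ W)
    (A : MPC n s q m (Fin v → Bits u)) (k : ℕ) (i : Fin m) (H : ℕ) :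
    ({ω : LineInstance n u v | H ≤ (Bset n u v W κ p w s q m A ω.1 ω.2 k i).ncard}.ncard : ℝ) ≤
      2 ^ (n * 2 ^ n + u * v) *
        (v ^ 2 * (2 ^ u)⁻¹ + 2 ^ s * w * (v ^ (p + 2) * q * (2 ^ u)⁻¹) ^ H) := by
  have hcover : {ω : LineInstance n u v | H ≤ (Bset n u v W κ p w s q m A ω.1 ω.2 k i).ncard} ⊆
      {ω | ¬ Function.Injective ω.2} ∪ ⋃ α : Advice v w p s q H,
        {ω | Function.Injective ω.2 ∧ α.Valid W κ (A.qf k i) ω} := fun ω hω => by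
    by_cases hinj : Function.Injective ω.2
    · obtain ⟨α, hα⟩ := exists_advice_valid (by omega) hw hω
      exact .inr (Set.mem_iUnion.2 ⟨α, hinj, hα⟩)
    · exact .inl hinj
  have hunion := (Set.ncard_le_ncard hcover).trans (Set.ncard_union_le _ _)
  calc _ ≤ ({ω : LineInstance n u v | ¬ Function.Injective ω.2}.ncard : ℝ) +
        ∑ α : Advice v w p s q H,
          ({ω : LineInstance n u v |
            Function.Injective ω.2 ∧ α.Valid W κ (A.qf k i) ω}.ncard : ℝ) :=
        mod_cast hunion.trans (by gcongr; exact Set.ncard_iUnion_le_of_fintype _)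
    _ ≤ 2 ^ (n * 2 ^ n + u * v) * (v ^ 2 * (2 ^ u)⁻¹) +
        ∑ _α : Advice v w p s q H, 2 ^ (n * 2 ^ n + u * v) * ((2 ^ u)⁻¹ : ℝ) ^ H :=
        add_le_add ncard_input_not_injective_le
          (Finset.sum_le_sum fun α _ => α.ncard_valid_le hn hW _)
    _ = 2 ^ (n * 2 ^ n + u * v) * (v ^ 2 * (2 ^ u)⁻¹ +
        Fintype.card (Advice v w p s q H) * ((2 ^ u)⁻¹ : ℝ) ^ H) := by
        rw [Finset.sum_const, nsmul_eq_mul, Finset.card_univ]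
        ring
    _ ≤ 2 ^ (n * 2 ^ n + u * v) * (v ^ 2 * (2 ^ u)⁻¹ +
        (2 ^ s * w * (v ^ (p + 2) * q) ^ H) * ((2 ^ u)⁻¹ : ℝ) ^ H) := by
        gcongr
        exact_mod_cast Advice.card_le
    _ = _ := by ring

theorem unifProb_mul_two_pow (P : LineInstance n u v → Prop) :
    unifProb P * 2 ^ (n * 2 ^ n + u * v) = {ω | P ω}.ncard := by
  have hcard : (2 : ℝ) ^ (n * 2 ^ n + u * v) = Fintype.card (LineInstance n u v) := by
    rw [← Nat.card_eq_fintype_card, card_lineInstance]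
    norm_cast
  rw [unifProb, ← hcard, div_mul_cancel₀ _ (by positivity)]

end UnionBound

end LineEncoding

open LineEncoding in
theorem stmt15_general {n u v w κ p W s q m : ℕ} (hv : 1 ≤ v) (hw : 2 ≤ w) (hq : 1 ≤ q)
    (hW : w + p ≤ 2 ^ W) (hn : W + 2 * u ≤ n)
    (hu : ((p : ℝ) + 2) * Real.logb 2 v + Real.logb 2 q < u) {h : ℝ}
    (hh : h ≤ s / ((u : ℝ) - ((p : ℝ) + 2) * Real.logb 2 v - Real.logb 2 q) + 1)
    (A : MPC n s q m (Fin v → Bits u)) (i : Fin m) (k : ℕ) :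
    ∃ Enc : (Bits n → Bits n) × (Fin v → Bits u) → List Bool,
      Set.InjOn Enc {ω | h ≤ (Bset n u v W κ p w s q m A ω.1 ω.2 k i).ncard} ∧
      ∀ ω, h ≤ (Bset n u v W κ p w s q m A ω.1 ω.2 k i).ncard → ((Enc ω).length : ℝ) ≤
        (n : ℝ) * 2 ^ n + s + h * (((p : ℝ) + 2) * Real.logb 2 v + Real.logb 2 q) +
          ((v : ℝ) - h) * u + 3 * Real.logb 2 w := by
  have : NeZero v := ⟨Nat.one_le_iff_ne_zero.1 hv⟩
  set δ := (u : ℝ) - ((p : ℝ) + 2) * Real.logb 2 v - Real.logb 2 q with hδ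
  refine exists_injOn_length_le (Set.toFinite _) ?_
  have hcount := ncard_le_ncard_Bset_le (κ := κ) (by omega) hn hW A k i ⌈h⌉₊
  simp only [Nat.ceil_le] at hcount
  have hbirthday : (v : ℝ) ^ 2 * (2 ^ u)⁻¹ ≤ v ^ (p + 2) * q * (2 ^ u)⁻¹ := by
    gcongr
    exact_mod_cast (Nat.pow_le_pow_right hv (Nat.le_add_left 2 p)).trans
      (Nat.le_mul_of_pos_right _ hq)
  calc _ ≤ _ := hcount
    _ ≤ 2 ^ (n * 2 ^ n + u * v) * ((2 : ℝ) ^ (-δ) + 2 ^ (s : ℝ) * w * ((2 : ℝ) ^ (-δ)) ^ ⌈h⌉₊) := by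
        rw [← mul_inv_two_pow_eq_rpow p u hv hq, Real.rpow_natCast]
        gcongr
    _ ≤ 2 ^ (n * 2 ^ n + u * v) * 2 ^ (s - h * δ + 3 * Real.logb 2 w - 1) := by
        gcongr
        exact add_mul_rpow_le (mod_cast hw) (by linarith) hh (Nat.le_ceil h)
    _ = _ := by
        rw [← Real.rpow_natCast, ← Real.rpow_add two_pos, hδ]
        push_cast
        ring_nf

/-- **Encoding claim inside the proof of Lemma 3.5 (up to an absolute constant `K`).**
In the Line setting with `u > (p+2)·log₂ v + log₂ q` and
`h := s/(u − (p+2)·log₂ v − log₂ q) + 1`: fix a deterministic MPC algorithm, a machine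
`i` and a round `k`.  If the probability over uniformly random `(RO, X)` that
`|B_i^{(k)}| > h` while `E^{(k)}` does not occur equals `ε`, then there is a set `F` of
pairs `(RO, X)` with `|F| ≥ ε·2^(n·2^n + u·v)` and an injective encoding of `F` into
binary strings of length at most
`n·2^n + s + h·((p+2)·log₂ v + log₂ q) + (v − h)·u + K·log₂ w`. -/
theorem stmt15 : ∃ K : ℝ, 0 < K ∧
    ∀ (n u v w κ p W s q m : ℕ),
    1 ≤ u → 2 ≤ w → 1 ≤ κ → v = 2 ^ κ →
    p = ⌈(Real.logb 2 w) ^ 2⌉₊ → W = Nat.clog 2 (w + p + 2) →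
    W + 2 * u ≤ n → κ + u ≤ n → 1 ≤ q → 1 ≤ m →
    ((p : ℝ) + 2) * Real.logb 2 v + Real.logb 2 q < (u : ℝ) →
    ∀ h : ℝ, h = (s : ℝ) / ((u : ℝ) - ((p : ℝ) + 2) * Real.logb 2 v - Real.logb 2 q) + 1 →
    ∀ (A : MPC n s q m (Fin v → Bits u)) (i : Fin m) (k : ℕ) (ε : ℝ),
    unifProb (fun ω : (Bits n → Bits n) × (Fin v → Bits u) =>
      h < ((Bset n u v W κ p w s q m A ω.1 ω.2 k i).ncard : ℝ) ∧
      ¬ (∃ k2 ≤ k, ∃ i2 : Fin m, ∃ t2 < q, ∃ j, 1 ≤ j ∧ j ≤ w ∧ ∃ b ≤ p, ∃ a : ℕ → Fin v,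
        mquery A ω.1 ω.2 k2 i2 t2 = branchE n u v W κ ω.1 ω.2 j a b ∧
        ∀ (k1 : ℕ) (i1 : Fin m) (t1 : ℕ), k1 ≤ k → t1 < q →
          (k1 < k2 ∨ (k1 = k2 ∧ i1 = i2 ∧ t1 < t2)) →
          mquery A ω.1 ω.2 k1 i1 t1 ≠
            (if b = 0 then lineE n u v W κ ω.1 ω.2 (j - 1)
             else branchE n u v W κ ω.1 ω.2 j a (b - 1)))) = ε →
    ∃ (F : Set ((Bits n → Bits n) × (Fin v → Bits u)))
      (Enc : (Bits n → Bits n) × (Fin v → Bits u) → List Bool),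
      ε * (2 : ℝ) ^ (n * 2 ^ n + u * v) ≤ (F.ncard : ℝ) ∧
      Set.InjOn Enc F ∧
      ∀ ω ∈ F, ((Enc ω).length : ℝ) ≤
        (n : ℝ) * 2 ^ n + (s : ℝ) +
          h * (((p : ℝ) + 2) * Real.logb 2 v + Real.logb 2 q) +
          ((v : ℝ) - h) * u + K * Real.logb 2 w := by
  refine ⟨3, by norm_num, fun n u v w κ p W s q m _ hw _ hv _ hW hn _ hq _ hu h hh A i k ε hε => ?_⟩
  have hW' : w + p ≤ 2 ^ W := by
    rw [hW]
    exact (Nat.le_add_right _ 2).trans (Nat.le_pow_clog one_lt_two _)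
  obtain ⟨Enc, hinj, hlen⟩ :=
    stmt15_general (hv ▸ Nat.one_le_two_pow) hw hq hW' hn hu hh.le A i k
  exact ⟨_, Enc, (hε ▸ LineEncoding.unifProb_mul_two_pow _).le, hinj.mono fun ω hω => hω.1.le,
    fun ω hω => hlen ω hω.1.le⟩
end

section
/- There is an absolute constant K such that the following holds in the Line setting. Assume u > (p+2)·log₂ v + log₂ q and let h := s/(u − (p+2)·log₂ v − log₂ q) + 1. For every deterministic MPC algorithm with m machines, local memory s bits, and at most q oracle queries per machine per round, and every integer k with 0 ≤ k < w/p − 1, the probability over uniformly random (RO, X) that Q^{(≤k)} ∩ C^{(k+1)} ≠ ∅ is at most K·(k+1)·m·((h/v)^p + w·q·v^p·2^(−u) + w·2^(−(u − (p+2)·log₂ v − log₂ q))). (The paper's inductive Claim in the proof of Lemma 3.6 states the bound (k+1)·m·((h/v)^{log²w} + w·q·v^{log²w}·2^(−u) + 2^(−(u − (log²w+2)·log v − log q))).) -/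
/-!
Reprogram a random oracle so that it gives independent random answers `z` along the chain: the
result is again uniformly random, and the pointers `ℓ_i` and the strings `r_i` are functions of `z`
alone.  If some query made through round `k` is an entry `e_i` with `i > (k + 1) p`, consider the
first round `k'` in which an entry `e_i` with `i > (k' + 1) p` is queried.  No entry beyond
`e_{k' p}` was queried in the earlier rounds, so the state of the machine making that query does
not depend on the later answers.  One of three things must happen in this round.

* The machine queries an entry without having queried its predecessor, hence guesses a
  uniformly random string `r_i`.
* Otherwise it walks through `p` consecutive entries, and hence queries the blocks to which their
  pointers lead.  Call a block known if the machine queries it for some choice of these `p`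
  pointers.  Many blocks may be known; but the `s` bits of the state and a code of the times and
  pointers at which they are queried determine these blocks, which is unlikely by counting.
* Few blocks are known, and `p` uniformly random pointers all lead to known blocks.
-/

namespace LineMPC

section Probability

variable {Ω Ω' ι R : Type} [Fintype Ω] [Fintype Ω'] [Fintype ι] [Fintype R] {P Q : Ω → Prop}
  {c : ℝ}

theorem unifProb_eq_card (P : Ω → Prop) :
    unifProb P = (Nat.card {ω // P ω} : ℝ) / Fintype.card Ω := rfl

theorem unifProb_mono (h : ∀ ω, P ω → Q ω) : unifProb P ≤ unifProb Q := by
  unfold unifProb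
  gcongr
  exacts [Set.toFinite _, h _]

theorem unifProb_or_le (P Q : Ω → Prop) :
    unifProb (fun ω => P ω ∨ Q ω) ≤ unifProb P + unifProb Q := by
  unfold unifProb
  rw [← add_div]
  gcongr
  exact_mod_cast Set.ncard_union_le {ω | P ω} {ω | Q ω}

theorem unifProb_exists_le {P : ι → Ω → Prop} (h : ∀ i, unifProb (P i) ≤ c) :
    unifProb (fun ω => ∃ i, P i ω) ≤ Fintype.card ι * c := by
  classical
  have filter_eq (Q : Ω → Prop) :
      unifProb Q = (Finset.univ.filter Q).card / (Fintype.card Ω : ℝ) := by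
    rw [unifProb, ← Set.ncard_coe_finset, Finset.coe_filter_univ]
  calc unifProb (fun ω => ∃ i, P i ω)
      = ((Finset.univ.biUnion fun i => Finset.univ.filter (P i)).card : ℝ) / Fintype.card Ω := by
        rw [filter_eq]; congr 3; ext; simp
    _ ≤ (∑ i, ((Finset.univ.filter (P i)).card : ℝ)) / Fintype.card Ω := by
        gcongr
        exact_mod_cast Finset.card_biUnion_le
    _ = ∑ i, unifProb (P i) := by simp_rw [filter_eq, Finset.sum_div]
    _ ≤ Fintype.card ι * c := by
        simpa using Finset.sum_le_card_nsmul Finset.univ _ c fun i _ => h i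

theorem unifProb_comp_bijective {e : Ω → Ω'} (he : e.Bijective) (P : Ω' → Prop) :
    unifProb (fun ω => P (e ω)) = unifProb P := by
  rw [unifProb_eq_card, unifProb_eq_card, Fintype.card_of_bijective he,
    Nat.card_congr ((Equiv.ofBijective e he).subtypeEquiv (p := fun ω => P (e ω)) fun _ => Iff.rfl)]

theorem unifProb_comp_fst [Nonempty R] (P : Ω → Prop) :
    unifProb (fun x : Ω × R => P x.1) = unifProb P := by
  rw [unifProb_eq_card, unifProb_eq_card, Nat.card_congr Equiv.prodSubtypeFstEquivSubtypeProd,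
    Nat.card_prod, Nat.card_eq_fintype_card (α := R), Fintype.card_prod]
  push_cast
  exact mul_div_mul_right _ _ (by simp)

theorem unifProb_prod_le [Nonempty Ω] [Nonempty R] {P : Ω × R → Prop}
    (h : ∀ ω, unifProb (fun r => P (ω, r)) ≤ c) : unifProb P ≤ c := by
  have hR : (0 : ℝ) < Fintype.card R := by exact_mod_cast Fintype.card_pos
  rw [unifProb_eq_card, Nat.card_congr (Equiv.subtypeProdEquivSigmaSubtype fun a b => P (a, b)),
    Nat.card_sigma, div_le_iff₀ (by exact_mod_cast Fintype.card_pos)]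
  push_cast
  calc ∑ ω, (Nat.card {r // P (ω, r)} : ℝ) ≤ ∑ _ω : Ω, c * Fintype.card R :=
        Finset.sum_le_sum fun ω _ => (div_le_iff₀ hR).1 (h ω)
    _ = c * Fintype.card (Ω × R) := by simp [mul_left_comm]

theorem unifProb_le_inv_card (h : ∀ ω ω', P ω → P ω' → ω = ω') :
    unifProb P ≤ (Fintype.card Ω : ℝ)⁻¹ := by
  rw [unifProb, ← one_div]
  gcongr
  exact_mod_cast (Set.ncard_le_one (Set.toFinite _)).2 fun _ hω _ hω' => h _ _ hω hω'

theorem unifProb_forall [DecidableEq ι] (P : Ω → Prop) :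
    unifProb (fun f : ι → Ω => ∀ i, P (f i)) = unifProb P ^ Fintype.card ι := by
  rw [unifProb_eq_card, unifProb_eq_card, div_pow, Nat.card_congr (Equiv.subtypePiEquivPi),
    Nat.card_pi, Fintype.card_fun]
  simp

/-- A lens: a component `get` of the outcome that can be overwritten by `set` without affecting
the rest.  It names the piece of the randomness that is resampled in a probability bound. -/
structure Lens (Ω R : Type) where
  get : Ω → R
  set : Ω → R → Ω
  set_set : ∀ ω r r', set (set ω r) r' = set ω r'
  set_get : ∀ ω, set ω (get ω) = ω
  get_set : ∀ ω r, get (set ω r) = r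

namespace Lens

theorem unifProb_le [Nonempty Ω] (L : Lens Ω R)
    (h : ∀ ω, unifProb (fun r => P (L.set ω r)) ≤ c) : unifProb P ≤ c := by
  have : Nonempty R := .map L.get inferInstance
  -- Exchanging the component with an independent fresh value is a measure-preserving involution.
  have hswap : Function.Involutive fun x : Ω × R => (L.set x.1 x.2, L.get x.1) := fun x => by
    simp only [L.set_set, L.set_get, L.get_set]
  rw [← unifProb_comp_fst (R := R) P,
    ← unifProb_comp_bijective hswap.bijective fun x : Ω × R => P x.1]
  exact unifProb_prod_le h

variable {A B C I J : Type}

/-- The component `M` of the component `L`. -/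
def comp (L : Lens A B) (M : Lens B C) : Lens A C where
  get a := M.get (L.get a)
  set a c := L.set a (M.set (L.get a) c)
  set_set a c c' := by simp only [L.set_set, L.get_set, M.set_set]
  set_get a := by simp only [M.set_get, L.set_get]
  get_set a c := by simp only [L.get_set, M.get_set]

/-- The first component of a pair. -/
def fst : Lens (A × B) A where
  get x := x.1
  set x a := (a, x.2)
  set_set _ _ _ := rfl
  set_get _ := rfl
  get_set _ _ := rfl

/-- The second component of a pair. -/
def snd : Lens (A × B) B where
  get x := x.2
  set x b := (x.1, b)
  set_set _ _ _ := rfl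
  set_get _ := rfl
  get_set _ _ := rfl

/-- The component `L` of every value of a function. -/
def pi (L : Lens A B) : Lens (I → A) (I → B) where
  get f i := L.get (f i)
  set f g i := L.set (f i) (g i)
  set_set _ _ _ := funext fun _ => L.set_set _ _ _
  set_get _ := funext fun _ => L.set_get _
  get_set _ _ := funext fun _ => L.get_set _ _

/-- The restriction of a function along an embedding. -/
noncomputable def restrict (e : I ↪ J) : Lens (J → A) (I → A) where
  get f := f ∘ e
  set f g := Function.extend e g f
  set_set f g g' := by
    funext j
    by_cases hj : ∃ i, e i = j
    · obtain ⟨i, rfl⟩ := hj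
      rw [e.injective.extend_apply, e.injective.extend_apply]
    · simp only [Function.extend_apply' _ _ _ hj]
  set_get f := by
    funext j
    by_cases hj : ∃ i, e i = j
    · obtain ⟨i, rfl⟩ := hj
      rw [e.injective.extend_apply, Function.comp_apply]
    · rw [Function.extend_apply' _ _ _ hj]
  get_set f g := Function.extend_comp e.injective g f

/-- The value of a function at `i`. -/
def eval [DecidableEq I] (i : I) : Lens (I → A) A where
  get f := f i
  set f a := Function.update f i a
  set_set _ _ _ := Function.update_idem _ _ _
  set_get _ := Function.update_eq_self _ _
  get_set _ _ := Function.update_self _ _ _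

end Lens

end Probability

section OracleAlgorithm

variable {n : ℕ} {f : List (Bits n) → Bits n}

theorem advAns_congr {RO RO' : Bits n → Bits n} {t : ℕ}
    (h : ∀ t' < t, RO (advQ n RO f t') = RO' (advQ n RO f t')) :
    advAns n RO f t = advAns n RO' f t := by
  induction t with
  | zero => rfl
  | succ t ih =>
    have hlast := h t t.lt_succ_self
    rw [advQ] at hlast
    rw [advAns, advAns, hlast, ih fun t' ht' => h t' (by omega)]

theorem mstate_congr {s q m : ℕ} {I : Type} (A : MPC n s q m I) {RO RO' : Bits n → Bits n}
    {X : I} {k : ℕ}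
    (h : ∀ k' < k, ∀ i, ∀ t < q, RO (mquery A RO X k' i t) = RO' (mquery A RO X k' i t)) :
    mstate A RO X k = mstate A RO' X k := by
  induction k with
  | zero => rfl
  | succ k ih =>
    have hans (i : Fin m) : advAns n RO (A.qf k i (mstate A RO X k i)) q =
        advAns n RO' (A.qf k i (mstate A RO X k i)) q := advAns_congr (h k k.lt_succ_self i)
    have hstate := ih fun k' hk' => h k' (by omega)
    simp only [hstate] at hans
    funext j
    simp only [mstate, hstate, hans]

theorem exists_advQ_eq_pred {O : ℕ → Bits n → Bits n} {E : ℕ → Bits n} {N q w : ℕ}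
    (hO : ∀ M y, (∀ j, M ≤ j → j < w → y ≠ E j) → O w y = O M y)
    (hguess : ∀ M, N ≤ M → M + 1 < w → ∀ t < q, advQ n (O M) f t ≠ E (M + 1))
    {t M : ℕ} (ht : t < q) (hNM : N ≤ M) (hMw : M + 1 < w)
    (hq : advQ n (O w) f t = E (M + 1)) : ∃ t' < t, advQ n (O w) f t' = E M := by
  induction t using Nat.strong_induction_on generalizing M with
  | _ t ih =>
    by_contra! hM
    -- By induction, a node after `E M` can only be reached through `E M`, so up to time `t` the
    -- oracle `O w` has answered like `O M`.
    have hlater (d : ℕ) : ∀ t' < t, M + d < w → advQ n (O w) f t' ≠ E (M + d) := by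
      induction d with
      | zero => exact fun t' ht' _ => hM t' ht'
      | succ d ihd =>
        intro t' ht' hd hq'
        obtain ⟨t'', ht'', hq''⟩ := ih t' ht' (M := M + d) (by omega) (by omega) hd hq'
        exact ihd t'' (by omega) (by omega) hq''
    have hans : advAns n (O w) f t = advAns n (O M) f t :=
      advAns_congr fun t' ht' => hO M _ fun j hMj hj => by
        obtain ⟨d, rfl⟩ := Nat.exists_eq_add_of_le hMj
        exact hlater d t' ht' hj
    apply hguess M hNM hMw t ht
    rw [advQ, ← hans]
    exact hq

theorem exists_advQ_eq_of_le {O : ℕ → Bits n → Bits n} {E : ℕ → Bits n} {N q w : ℕ}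
    (hO : ∀ M y, (∀ j, M ≤ j → j < w → y ≠ E j) → O w y = O M y)
    (hguess : ∀ M, N ≤ M → M + 1 < w → ∀ t < q, advQ n (O M) f t ≠ E (M + 1))
    {t M M' : ℕ} (ht : t < q) (hNM : N ≤ M) (hMM' : M ≤ M') (hM'w : M' < w)
    (hq : advQ n (O w) f t = E M') : ∃ t' < q, advQ n (O w) f t' = E M := by
  induction M', hMM' using Nat.le_induction generalizing t with
  | base => exact ⟨t, ht, hq⟩
  | succ M' hMM' ih =>
    obtain ⟨t', ht', hq'⟩ := exists_advQ_eq_pred hO hguess ht (hNM.trans hMM') hM'w hq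
    exact ih (ht'.trans ht) (by omega) hq'

end OracleAlgorithm

section Compression

variable {n q : ℕ} {ι B S 𝒜 J : Type}

/-- The oracle `O X` depends on the blocks of `X` only through `reads`: the relation
`reads y j x` says that the query `y` spells out the value `x` of block `j`, and the answer to `y`
depends only on which blocks of `X` are spelt out correctly by `y`. -/
structure IsBlockLocal (O : (ι → B) → Bits n → Bits n) (reads : Bits n → ι → B → Prop) :
    Prop where
  unique : ∀ {y j x x'}, reads y j x → reads y j x' → x = x'
  congr : ∀ {X X' y}, (∀ j, reads y j (X j) ∨ reads y j (X' j) → X j = X' j) → O X y = O X' y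

/-- The `t`-th query of `f`, run with the oracle `O X`, spells out block `j` of `X`. -/
def Reveals (O : (ι → B) → Bits n → Bits n) (reads : Bits n → ι → B → Prop)
    (f : List (Bits n) → Bits n) (X : ι → B) (t : ℕ) (j : ι) : Prop :=
  reads (advQ n (O X) f t) j (X j)

variable (O : 𝒜 → (ι → B) → Bits n → Bits n) (reads : 𝒜 → Bits n → ι → B → Prop)

/-- The blocks of `X` revealed by the first `q` queries of `f` when it is run once with each of
the oracles `O a X`. -/
def revealed (q : ℕ) (f : List (Bits n) → Bits n) (X : ι → B) : Set ι :=
  {j | ∃ a, ∃ t < q, Reveals (O a) (reads a) f X t j}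

/-- `g c = (t, a)` records a first time `t` at which block `e c` is revealed when the runs of `f`
with all the oracles `O a X` proceed in parallel, and a run `a` revealing it then. -/
def IsCode (f : List (Bits n) → Bits n) (e : J ↪ ι) (g : J → Fin q × 𝒜) (X : ι → B) : Prop :=
  ∀ c, Reveals (O (g c).2) (reads (g c).2) f X (g c).1 (e c) ∧
    ∀ a, ∀ t < ((g c).1 : ℕ), ¬ Reveals (O a) (reads a) f X t (e c)

variable {O reads} {f : List (Bits n) → Bits n}

theorem IsCode.advAns_eq (hO : ∀ a, IsBlockLocal (O a) (reads a)) {e : J ↪ ι}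
    {g : J → Fin q × 𝒜} {X X' : ι → B} (hX : IsCode O reads f e g X)
    (hX' : IsCode O reads f e g X') (hagree : ∀ j ∉ Set.range e, X j = X' j) (t : ℕ) (a : 𝒜) :
    advAns n (O a X) f t = advAns n (O a X') f t := by
  induction t using Nat.strong_induction_on generalizing a with
  | _ t ih =>
    have hquery (a : 𝒜) {t' : ℕ} (ht' : t' < t) :
        advQ n (O a X) f t' = advQ n (O a X') f t' := congrArg f (ih t' ht' a)
    refine advAns_congr fun t' ht' => (hO a).congr fun j hj => ?_
    by_cases hje : j ∈ Set.range e
    · obtain ⟨c, rfl⟩ := hje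
      have hc : ((g c).1 : ℕ) ≤ t' := by
        by_contra! hlt
        refine hj.elim ((hX c).2 a t' hlt) fun h => (hX' c).2 a t' hlt ?_
        rwa [Reveals, ← hquery a ht']
      have hrev := (hX c).1
      rw [Reveals, hquery _ (hc.trans_lt ht')] at hrev
      exact (hO _).unique hrev (hX' c).1
    · exact hagree j hje

theorem IsCode.eq (hO : ∀ a, IsBlockLocal (O a) (reads a)) {e : J ↪ ι} {g : J → Fin q × 𝒜}
    {X X' : ι → B} (hX : IsCode O reads f e g X) (hX' : IsCode O reads f e g X')
    (hagree : ∀ j ∉ Set.range e, X j = X' j) : X = X' := by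
  funext j
  by_cases hje : j ∈ Set.range e
  · obtain ⟨c, rfl⟩ := hje
    have hrev := (hX c).1
    rw [Reveals, advQ, hX.advAns_eq hO hX' hagree] at hrev
    exact (hO _).unique hrev (hX' c).1
  · exact hagree j hje

theorem exists_isCode {X : ι → B} {α : ℕ} [Finite ι] (hα : α ≤ (revealed O reads q f X).ncard) :
    ∃ (e : Fin α ↪ ι) (g : Fin α → Fin q × 𝒜), IsCode O reads f e g X := by
  classical
  obtain ⟨J, hJ, hJcard⟩ := Set.exists_subset_card_eq hα
  let e : Fin α ≃ J := (Finite.equivFinOfCardEq hJcard).symm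
  have hfirst (c : Fin α) : ∃ x : Fin q × 𝒜, Reveals (O x.2) (reads x.2) f X x.1 (e c) ∧
      ∀ a, ∀ t < (x.1 : ℕ), ¬ Reveals (O a) (reads a) f X t (e c) := by
    have hrev : ∃ t < q, ∃ a, Reveals (O a) (reads a) f X t (e c) := by
      obtain ⟨a, t, ht, h⟩ := hJ (e c).2
      exact ⟨t, ht, a, h⟩
    obtain ⟨ht, a, ha⟩ := Nat.find_spec hrev
    exact ⟨(⟨Nat.find hrev, ht⟩, a), ha, fun a' t' ht' h =>
      Nat.find_min hrev ht' ⟨ht'.trans ht, a', h⟩⟩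
  choose g hg using hfirst
  exact ⟨e.toEmbedding.trans (.subtype _), g, hg⟩

variable [Fintype ι] [DecidableEq ι] [Fintype B] [Nonempty B]

theorem unifProb_isCode_le {α : ℕ} (hO : ∀ a, IsBlockLocal (O a) (reads a)) (e : Fin α ↪ ι)
    (g : Fin α → Fin q × 𝒜) :
    unifProb (IsCode O reads f e g) ≤ ((Fintype.card B : ℝ) ^ α)⁻¹ := by
  refine (Lens.restrict e).unifProb_le fun X => ?_
  have hdecode (r r' : Fin α → B) (h : IsCode O reads f e g ((Lens.restrict e).set X r))
      (h' : IsCode O reads f e g ((Lens.restrict e).set X r')) : r = r' :=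
    Function.extend_injective e.injective X <| h.eq hO h' fun j hj => by
      simp only [Lens.restrict, Function.extend_apply' _ _ _ hj]
  simpa using unifProb_le_inv_card hdecode

/-- The advice `σ X` and the code of the revealed blocks determine these blocks. -/
theorem unifProb_le_ncard_revealed_le [Fintype S] [Fintype 𝒜]
    (hO : ∀ a, IsBlockLocal (O a) (reads a)) (F : S → List (Bits n) → Bits n)
    (σ : (ι → B) → S) (α : ℕ) :
    unifProb (fun X => α ≤ (revealed O reads q (F (σ X)) X).ncard) ≤
      Fintype.card S *
        (Fintype.card ι * (q * Fintype.card 𝒜) / Fintype.card B : ℝ) ^ α := by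
  calc unifProb (fun X => α ≤ (revealed O reads q (F (σ X)) X).ncard)
      ≤ unifProb (fun X => ∃ x : S × (Fin α ↪ ι) × (Fin α → Fin q × 𝒜),
          IsCode O reads (F x.1) x.2.1 x.2.2 X) := unifProb_mono fun X hX =>
        let ⟨e, g, h⟩ := exists_isCode hX
        ⟨(σ X, e, g), h⟩
    _ ≤ Fintype.card (S × (Fin α ↪ ι) × (Fin α → Fin q × 𝒜)) * ((Fintype.card B : ℝ) ^ α)⁻¹ :=
        unifProb_exists_le fun x => unifProb_isCode_le hO x.2.1 x.2.2
    _ = Fintype.card S * ((Fintype.card ι).descFactorial α * (q * Fintype.card 𝒜) ^ α) *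
          ((Fintype.card B : ℝ) ^ α)⁻¹ := by simp [Fintype.card_embedding_eq, mul_pow]
    _ ≤ Fintype.card S * (Fintype.card ι ^ α * (q * Fintype.card 𝒜) ^ α) *
          ((Fintype.card B : ℝ) ^ α)⁻¹ := by
        gcongr
        exact_mod_cast Nat.descFactorial_le_pow _ _
    _ = _ := by simp only [div_eq_mul_inv, mul_pow, inv_pow, mul_assoc]

end Compression

section BitString

variable {n W u κ v : ℕ}

theorem bitAt_coe {k : ℕ} (y : Bits k) (j : Fin k) : bitAt y j = y j := dif_pos j.2

theorem getX_val_mod (X : Fin v → Bits u) (j : Fin v) : getX X ((j : ℕ) % v) = X j := by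
  rw [Nat.mod_eq_of_lt j.2, getX, dif_pos j.2]

theorem lineStr_inj {i i' : ℕ} {x x' ρ ρ' : Bits u} (hn : W + 2 * u ≤ n)
    (h : lineStr n W u i x ρ = lineStr n W u i' x' ρ') : x = x' ∧ ρ = ρ' := by
  refine ⟨funext fun j => ?_, funext fun j => ?_⟩
  · have hbit := congrFun h ⟨W + j, by omega⟩
    simpa [lineStr, bitAt_coe] using hbit
  · have hbit := congrFun h ⟨W + u + j, by omega⟩
    have hlt : u + (j : ℕ) < 2 * u := by omega
    simpa [lineStr, hlt, add_assoc, bitAt_coe] using hbit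

theorem lineStr_index_inj {i i' : ℕ} {x x' ρ ρ' : Bits u} (hn : W ≤ n) (hi : i < 2 ^ W)
    (hi' : i' < 2 ^ W) (h : lineStr n W u i x ρ = lineStr n W u i' x' ρ') : i = i' := by
  refine Nat.eq_of_testBit_eq fun j => ?_
  by_cases hj : j < W
  · have hbit := congrFun h ⟨j, by omega⟩
    simpa [lineStr, hj] using hbit
  · have hpow : 2 ^ W ≤ 2 ^ j := Nat.pow_le_pow_right two_pos (by omega)
    rw [Nat.testBit_lt_two_pow (by omega), Nat.testBit_lt_two_pow (by omega)]

theorem natOf_eq_sum_filter (y : Bits n) (κ : ℕ) :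
    natOf y κ = ∑ j ∈ Finset.range κ with bitAt y j, 2 ^ j := by
  rw [natOf, Finset.sum_filter]

theorem natOf_lt (y : Bits n) (κ : ℕ) : natOf y κ < 2 ^ κ := by
  rw [natOf_eq_sum_filter]
  exact Nat.geomSum_lt le_rfl fun j hj => Finset.mem_range.1 (Finset.mem_filter.1 hj).1

theorem natOf_injective : Function.Injective fun b : Bits κ => natOf b κ := fun b b' h => by
  simp only [natOf_eq_sum_filter] at h
  have hbits := Finset.geomSum_injective le_rfl h
  funext j
  have hj := Finset.ext_iff.1 hbits j
  simp only [Finset.mem_filter, Finset.mem_range, j.2, true_and, bitAt_coe] at hj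
  exact Bool.eq_iff_iff.2 hj

/-- The block pointer encoded by a bit string, stored from `0`. -/
def toPointer (v : ℕ) [NeZero v] (b : Bits κ) : Fin v := Fin.ofNat v (natOf b κ)

theorem toPointer_bijective [NeZero v] (hv : v = 2 ^ κ) :
    Function.Bijective (toPointer v (κ := κ)) := by
  refine (Fintype.bijective_iff_injective_and_card _).2 ⟨fun b b' h => natOf_injective ?_, ?_⟩
  · have hmod := congrArg Fin.val h
    rwa [toPointer, toPointer, Fin.val_ofNat, Fin.val_ofNat, Nat.mod_eq_of_lt (hv ▸ natOf_lt b κ),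
      Nat.mod_eq_of_lt (hv ▸ natOf_lt b' κ)] at hmod
  · simp [hv]

/-- The bits of a string in positions `lo, …, lo + len - 1`. -/
def Lens.field (lo len : ℕ) (h : lo + len ≤ n) : Lens (Bits n) (Bits len) where
  get y j := bitAt y (lo + j)
  set y b j := if hj : lo ≤ (j : ℕ) ∧ (j : ℕ) < lo + len then b ⟨j - lo, by omega⟩ else y j
  set_set y b b' := by
    funext j
    by_cases hj : lo ≤ (j : ℕ) ∧ (j : ℕ) < lo + len
    · simp only [dif_pos hj]
    · simp only [dif_neg hj]
  set_get y := by
    funext j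
    split_ifs with hj
    · simp only [Nat.add_sub_cancel' hj.1, bitAt_coe]
    · rfl
  get_set y b := by
    funext j
    simp [bitAt, show lo + (j : ℕ) < n by omega]

theorem natOf_field_get (h : 0 + κ ≤ n) (y : Bits n) :
    natOf ((Lens.field 0 κ h).get y) κ = natOf y κ := by
  refine Finset.sum_congr rfl fun j hj => ?_
  rw [bitAt, dif_pos (Finset.mem_range.1 hj)]
  simp only [Lens.field, zero_add]

end BitString

section Chain

variable {n u v w W κ N i : ℕ} [NeZero v]

/-- The pointer `ℓ_{i+1}` (stored from `0`) of a Line chain with prescribed answers `z`. -/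
def pointer (κ : ℕ) (z : Fin w → Bits n) : ℕ → Fin v
  | 0 => 0
  | i + 1 => if h : i < w then Fin.ofNat v (natOf (z ⟨i, h⟩) κ) else 0

/-- The string `r_{i+1}` of a Line chain with prescribed answers `z`. -/
def pad (κ : ℕ) (z : Fin w → Bits n) : ℕ → Bits u
  | 0 => fun _ => false
  | i + 1 => if h : i < w then fun j => bitAt (z ⟨i, h⟩) (κ + j) else fun _ => false

/-- The chain entry `e_{i+1}` of a Line chain with prescribed answers `z`. -/
def node (W κ : ℕ) (z : Fin w → Bits n) (X : Fin v → Bits u) (i : ℕ) : Bits n :=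
  lineStr n W u (i + 1) (X (pointer κ z i)) (pad κ z i)

/-- The oracle `T`, reprogrammed to give the prescribed answers `z` at the first `N` entries of
the chain. -/
noncomputable def plant (W κ : ℕ) (T : Bits n → Bits n) (X : Fin v → Bits u) (z : Fin w → Bits n)
    (N : ℕ) : Bits n → Bits n :=
  Function.extend (fun i : {i : Fin w // (i : ℕ) < N} => node W κ z X i) (fun i => z i) T

theorem pointer_succ {z : Fin w → Bits n} (h : i < w) :
    pointer κ z (i + 1) = Fin.ofNat v (natOf (z ⟨i, h⟩) κ) := dif_pos h

theorem pad_succ {z : Fin w → Bits n} (h : i < w) :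
    (pad κ z (i + 1) : Bits u) = fun j : Fin u => bitAt (z ⟨i, h⟩) (κ + j) := dif_pos h

section Congr

variable {z z' : Fin w → Bits n}

theorem pointer_congr (h : ∀ j : Fin w, (j : ℕ) < i → z j = z' j) :
    (pointer κ z i : Fin v) = pointer κ z' i := by
  cases i with
  | zero => rfl
  | succ i =>
    simp only [pointer]
    split_ifs with hi
    · rw [h ⟨i, hi⟩ i.lt_succ_self]
    · rfl

theorem pad_congr (h : ∀ j : Fin w, (j : ℕ) < i → z j = z' j) :
    (pad κ z i : Bits u) = pad κ z' i := by
  cases i with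
  | zero => rfl
  | succ i =>
    simp only [pad]
    split_ifs with hi
    · rw [h ⟨i, hi⟩ i.lt_succ_self]
    · rfl

theorem node_congr (h : ∀ j : Fin w, (j : ℕ) < i → z j = z' j) (X : Fin v → Bits u) :
    node W κ z X i = node W κ z' X i := by
  rw [node, node, pointer_congr h, pad_congr h]

theorem plant_congr (h : ∀ j : Fin w, (j : ℕ) < N → z j = z' j) (T : Bits n → Bits n)
    (X : Fin v → Bits u) : plant W κ T X z N = plant W κ T X z' N := by
  have hnode (i : {i : Fin w // (i : ℕ) < N}) : node W κ z X i = node W κ z' X i :=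
    node_congr (fun j hj => h j (hj.trans i.2)) X
  have hz (i : {i : Fin w // (i : ℕ) < N}) : z i = z' i := h i i.2
  simp only [plant, hnode, hz]

end Congr

variable {T : Bits n → Bits n} {X : Fin v → Bits u} {z : Fin w → Bits n}

theorem node_inj (hW : W ≤ n) (hw : w < 2 ^ W) {z' : Fin w → Bits n} {X' : Fin v → Bits u}
    {i j : Fin w} (h : node W κ z X i = node W κ z' X' j) : i = j :=
  Fin.ext <| Nat.succ_injective <| lineStr_index_inj hW (by omega) (by omega) h

theorem plant_node (hW : W ≤ n) (hw : w < 2 ^ W) {i : Fin w} (hi : (i : ℕ) < N) :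
    plant W κ T X z N (node W κ z X i) = z i :=
  Function.Injective.extend_apply
    (f := fun i : {i : Fin w // (i : ℕ) < N} => node W κ z X i)
    (fun _ _ h => Subtype.ext (node_inj hW hw h)) (fun i => z i) T ⟨i, hi⟩

theorem plant_of_ne {y : Bits n} (h : ∀ i : Fin w, (i : ℕ) < N → node W κ z X i ≠ y) :
    plant W κ T X z N y = T y :=
  Function.extend_apply' _ _ _ fun ⟨i, hi⟩ => h i i.2 hi

theorem plant_eq_plant_of_ne (hW : W ≤ n) (hw : w < 2 ^ W) {y : Bits n}
    (h : ∀ j, N ≤ j → j < w → y ≠ node W κ z X j) :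
    plant W κ T X z w y = plant W κ T X z N y := by
  by_cases hy : ∃ i : Fin w, (i : ℕ) < N ∧ node W κ z X i = y
  · obtain ⟨i, hi, rfl⟩ := hy
    rw [plant_node hW hw hi, plant_node hW hw i.2]
  · push Not at hy
    rw [plant_of_ne hy, plant_of_ne fun i _ hi => ?_]
    rcases lt_or_ge (i : ℕ) N with hiN | hiN
    exacts [hy i hiN hi, h i hiN i.2 hi.symm]

/-- The query `y` is an `i`-th chain entry with value `x` in place of the block `j` to which the
chain points at that moment. -/
def ReadsBlock (W κ : ℕ) (z : Fin w → Bits n) (y : Bits n) (j : Fin v) (x : Bits u) : Prop :=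
  ∃ i : Fin w, y = lineStr n W u (i + 1) x (pad κ z i) ∧ pointer κ z i = j

theorem readsBlock_node (X : Fin v → Bits u) (i : Fin w) :
    ReadsBlock W κ z (node W κ z X i) (pointer κ z i : Fin v) (X (pointer κ z i)) :=
  ⟨i, rfl, rfl⟩

theorem isBlockLocal_plant (hn : W + 2 * u ≤ n) (hw : w < 2 ^ W) (T : Bits n → Bits n)
    (z : Fin w → Bits n) :
    IsBlockLocal (fun X : Fin v → Bits u => plant W κ T X z w) (ReadsBlock W κ z) where
  unique := fun ⟨_, hy, _⟩ ⟨_, hy', _⟩ => (lineStr_inj hn (hy.symm.trans hy')).1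
  congr {X X' y} h := by
    have hnode (i : Fin w) : node W κ z X i = y ↔ node W κ z X' i = y := by
      by_cases hX : X (pointer κ z i) = X' (pointer κ z i)
      · rw [node, node, hX]
      · exact iff_of_false (fun hy => hX (h _ (.inl (hy ▸ readsBlock_node X i))))
          fun hy => hX (h _ (.inr (hy ▸ readsBlock_node X' i)))
    by_cases hy : ∃ i : Fin w, node W κ z X i = y
    · obtain ⟨i, hi⟩ := hy
      have hz : plant W κ T X z w y = z i := hi ▸ plant_node (by omega) hw i.2
      have hz' : plant W κ T X' z w y = z i := (hnode i).1 hi ▸ plant_node (by omega) hw i.2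
      exact hz.trans hz'.symm
    · push Not at hy
      exact (plant_of_ne fun i _ => hy i).trans
        (plant_of_ne fun i _ => mt (hnode i).2 (hy i)).symm

theorem lineChain_plant (hW : W ≤ n) (hw : w < 2 ^ W) (hi : i ≤ w) :
    lineChain n u v W κ (plant W κ T X z w) X i = ((pointer κ z i : Fin v).1, pad κ z i) := by
  induction i with
  | zero => rfl
  | succ i ih =>
    have hanswer : plant W κ T X z w (node W κ z X i) = z ⟨i, hi⟩ :=
      plant_node hW hw (i := ⟨i, hi⟩) hi
    rw [node] at hanswer
    simp only [lineChain, ih (by omega), getX_val_mod, hanswer, pointer_succ hi, pad_succ hi,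
      Fin.val_ofNat]

theorem lineE_plant (hW : W ≤ n) (hw : w < 2 ^ W) (hi : i ≤ w) :
    lineE n u v W κ (plant W κ T X z w) X i = node W κ z X i := by
  rw [lineE, lineChain_plant hW hw hi, getX_val_mod, node]

/-- A random oracle `T`, a random input `X`, and independent random answers `z` along the chain. -/
abbrev Sample (n u v w : ℕ) : Type :=
  ((Bits n → Bits n) × (Fin v → Bits u)) × (Fin w → Bits n)

/-- Exchange the answers of the oracle along the chain with the prescribed ones.  As this is a
bijection, the oracle with planted answers is again uniformly random. -/
noncomputable def swapAnswers (W κ : ℕ) (ω : Sample n u v w) : Sample n u v w :=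
  ((plant W κ ω.1.1 ω.1.2 ω.2 w, ω.1.2), fun i => ω.1.1 (node W κ ω.2 ω.1.2 i))

theorem swapAnswers_injective (hW : W ≤ n) (hw : w < 2 ^ W) :
    Function.Injective (swapAnswers W κ : Sample n u v w → Sample n u v w) := by
  rintro ⟨⟨T, X⟩, z⟩ ⟨⟨T', X'⟩, z'⟩ h
  simp only [swapAnswers, Prod.mk.injEq] at h
  obtain ⟨⟨hRO, rfl⟩, hT⟩ := h
  have answer_eq (T : Bits n → Bits n) (z : Fin w → Bits n) (i : Fin w) :
      z i = plant W κ T X z w (lineE n u v W κ (plant W κ T X z w) X i) := by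
    rw [lineE_plant hW hw i.2.le, plant_node hW hw i.2]
  obtain rfl : z = z' := funext fun i => by rw [answer_eq T z, answer_eq T' z', hRO]
  obtain rfl : T = T' := funext fun y => by
    by_cases hy : ∃ i : Fin w, node W κ z X i = y
    · obtain ⟨i, rfl⟩ := hy
      exact congrFun hT i
    · push Not at hy
      have hy' (i : Fin w) (_ : (i : ℕ) < w) := hy i
      rw [← plant_of_ne (T := T) hy', hRO, plant_of_ne hy']
  rfl

theorem unifProb_eq_plant (hW : W ≤ n) (hw : w < 2 ^ W)
    (P : (Bits n → Bits n) × (Fin v → Bits u) → Prop) :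
    unifProb P = unifProb fun ω : Sample n u v w => P (plant W κ ω.1.1 ω.1.2 ω.2 w, ω.1.2) := by
  rw [← unifProb_comp_fst (R := Fin w → Bits n) P]
  exact (unifProb_comp_bijective (Finite.injective_iff_bijective.1
    (swapAnswers_injective (κ := κ) hW hw)) fun x : Sample n u v w => P x.1).symm

end Chain

section SingleRound

variable {n u v w W κ N p q : ℕ} [NeZero v] {S : Type}

/-- The oracle of the outcome `ω`, with only the first `N` chain answers planted. -/
noncomputable def oracle (W κ : ℕ) (ω : Sample n u v w) (N : ℕ) : Bits n → Bits n :=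
  plant W κ ω.1.1 ω.1.2 ω.2 N

/-- The query function used by a machine with behaviour `F` on the advice `σ`, when the advice was
computed before anything was learnt about the chain answers from number `N` on. -/
noncomputable def program (W κ N : ℕ) (F : S → List (Bits n) → Bits n)
    (σ : (Bits n → Bits n) → (Fin v → Bits u) → S) (ω : Sample n u v w) :
    List (Bits n) → Bits n :=
  F (σ (oracle W κ ω N) ω.1.2)

variable (F : S → List (Bits n) → Bits n) (σ : (Bits n → Bits n) → (Fin v → Bits u) → S)

theorem unifProb_guess_le (hn : W + 2 * u ≤ n) (hκu : κ + u ≤ n) (j : Fin w) (t : ℕ) :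
    unifProb (fun ω : Sample n u v w => N ≤ j ∧
      advQ n (oracle W κ ω j) (program W κ N F σ ω) t = node W κ ω.2 ω.1.2 (j + 1)) ≤
      ((2 : ℝ) ^ u)⁻¹ := by
  let L : Lens (Sample n u v w) (Bits u) :=
    Lens.snd.comp ((Lens.eval j).comp (Lens.field κ u hκu))
  have hset (ω : Sample n u v w) (r : Bits u) {i : Fin w} (hi : (i : ℕ) < j) :
      (L.set ω r).2 i = ω.2 i := Function.update_of_ne (Fin.ne_of_lt hi) _ _
  have horacle (ω : Sample n u v w) (r : Bits u) {M : ℕ} (hM : M ≤ j) :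
      oracle W κ (L.set ω r) M = oracle W κ ω M :=
    plant_congr (fun _ hi => hset ω r (hi.trans_le hM)) ω.1.1 ω.1.2
  have hprogram (ω : Sample n u v w) (r : Bits u) (hN : N ≤ j) :
      program W κ N F σ (L.set ω r) = program W κ N F σ ω := by
    rw [program, horacle ω r hN]; rfl
  have hpad (ω : Sample n u v w) (r : Bits u) : pad κ (L.set ω r).2 (j + 1) = r :=
    (pad_succ j.2).trans (L.get_set ω r)
  refine L.unifProb_le fun ω => (unifProb_le_inv_card fun r r' h h' => ?_).trans_eq (by simp)
  rw [horacle ω _ le_rfl, hprogram ω _ h.1] at h h'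
  simpa only [hpad] using (lineStr_inj hn (h.2.symm.trans h'.2)).2

/-- The first `κ` bits of the chain answers number `N, …, N + p - 1`, which encode the pointers
at the following chain entries. -/
noncomputable def pointerBits (hκ : κ ≤ n) (hN : N + p ≤ w) :
    Lens (Fin w → Bits n) (Fin p → Bits κ) :=
  (Lens.restrict ((Fin.natAddEmb N).trans (Fin.castLEEmb hN))).comp
    (.pi (.field 0 κ (by omega)))

theorem pointerBits_set_of_lt (hκ : κ ≤ n) (hN : N + p ≤ w) (z : Fin w → Bits n)
    (a : Fin p → Bits κ) {i : Fin w} (hi : (i : ℕ) < N) :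
    (pointerBits hκ hN).set z a i = z i := by
  refine Function.extend_apply' _ _ _ ?_
  rintro ⟨c, rfl⟩
  simp at hi

theorem pointer_eq_toPointer (hκ : κ ≤ n) (hN : N + p ≤ w) (z : Fin w → Bits n) (c : Fin p) :
    (pointer κ z (N + c + 1) : Fin v) = toPointer v ((pointerBits hκ hN).get z c) := by
  rw [pointer_succ (by omega), toPointer]
  exact congrArg _ (natOf_field_get (by omega) _).symm

/-- The blocks revealed by the program if the pointers to the chain entries number
`N + 1, …, N + p` are replaced by all possible ones. -/
noncomputable def knownBlocks (W q : ℕ) (hκ : κ ≤ n) (hN : N + p ≤ w)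
    (F : S → List (Bits n) → Bits n) (σ : (Bits n → Bits n) → (Fin v → Bits u) → S)
    (ω : Sample n u v w) : Set (Fin v) :=
  revealed (fun a X => plant W κ ω.1.1 X ((pointerBits hκ hN).set ω.2 a) w)
    (fun a => ReadsBlock W κ ((pointerBits hκ hN).set ω.2 a)) q (program W κ N F σ ω) ω.1.2

theorem knownBlocks_set (hκ : κ ≤ n) (hN : N + p ≤ w) (ω : Sample n u v w)
    (a : Fin p → Bits κ) :
    knownBlocks W q hκ hN F σ (ω.1, (pointerBits hκ hN).set ω.2 a) =
      knownBlocks W q hκ hN F σ ω := by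
  have hprogram : program W κ N F σ (ω.1, (pointerBits hκ hN).set ω.2 a) =
      program W κ N F σ ω := by
    rw [program, oracle, plant_congr fun i hi => pointerBits_set_of_lt hκ hN ω.2 a hi]; rfl
  simp only [knownBlocks, hprogram, Lens.set_set]

theorem unifProb_pointers_mem_knownBlocks_le (hv : v = 2 ^ κ) (hκ : κ ≤ n) (hN : N + p ≤ w)
    (α : ℕ) :
    unifProb (fun ω : Sample n u v w => (knownBlocks W q hκ hN F σ ω).ncard ≤ α ∧
      ∀ c : Fin p, pointer κ ω.2 (N + c + 1) ∈ knownBlocks W q hκ hN F σ ω) ≤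
      ((α : ℝ) / v) ^ p := by
  refine (Lens.snd.comp (pointerBits hκ hN)).unifProb_le fun ω => ?_
  simp only [Lens.comp, Lens.snd, knownBlocks_set, pointer_eq_toPointer hκ hN, Lens.get_set]
  set B := knownBlocks W q hκ hN F σ ω
  by_cases hB : B.ncard ≤ α
  · calc unifProb (fun a : Fin p → Bits κ => B.ncard ≤ α ∧ ∀ c, toPointer v (a c) ∈ B)
        ≤ unifProb (fun a : Fin p → Bits κ => ∀ c, toPointer v (a c) ∈ B) :=
          unifProb_mono fun _ h => h.2
      _ = unifProb (fun b : Bits κ => toPointer v b ∈ B) ^ p := by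
          rw [unifProb_forall fun b : Bits κ => toPointer v b ∈ B, Fintype.card_fin]
      _ = ((B.ncard : ℝ) / v) ^ p := by
          rw [unifProb_comp_bijective (toPointer_bijective hv) (· ∈ B), unifProb, Set.ofPred_mem_eq,
            Fintype.card_fin]
      _ ≤ ((α : ℝ) / v) ^ p := by gcongr
  · simp only [hB, false_and, unifProb, Set.ofPred_false, Set.ncard_empty, Nat.cast_zero, zero_div]
    positivity

theorem unifProb_le_ncard_knownBlocks_le [Fintype S] (hv : v = 2 ^ κ) (hn : W + 2 * u ≤ n)
    (hw : w < 2 ^ W) (hκ : κ ≤ n) (hN : N + p ≤ w) (α : ℕ) :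
    unifProb (fun ω : Sample n u v w => α ≤ (knownBlocks W q hκ hN F σ ω).ncard) ≤
      Fintype.card S * ((v : ℝ) * (q * (v : ℝ) ^ p) / (2 : ℝ) ^ u) ^ α := by
  refine (Lens.fst.comp Lens.snd).unifProb_le fun ω => ?_
  have hlocal (a : Fin p → Bits κ) :=
    isBlockLocal_plant (u := u) (v := v) (κ := κ) hn hw ω.1.1 ((pointerBits hκ hN).set ω.2 a)
  have hcompress := unifProb_le_ncard_revealed_le (q := q) hlocal F
    (fun X => σ (plant W κ ω.1.1 X ω.2 N) X) α
  exact hcompress.trans_eq (by simp [hv])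

theorem guess_or_pointers_mem_knownBlocks (hn : W ≤ n) (hw : w < 2 ^ W) (hκ : κ ≤ n)
    (hN : N + p < w) (ω : Sample n u v w)
    (hhit : ∃ t < q, ∃ i, N + p ≤ i ∧ i < w ∧
      advQ n (oracle W κ ω w) (program W κ N F σ ω) t = node W κ ω.2 ω.1.2 i) :
    (∃ x : Fin w × Fin q, N ≤ x.1 ∧
      advQ n (oracle W κ ω x.1) (program W κ N F σ ω) x.2 = node W κ ω.2 ω.1.2 (x.1 + 1)) ∨
    ∀ c : Fin p, pointer κ ω.2 (N + c + 1) ∈ knownBlocks W q hκ hN.le F σ ω := by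
  refine or_iff_not_imp_left.2 fun hguess c => ?_
  push Not at hguess
  obtain ⟨t, ht, i, hNi, hiw, hq⟩ := hhit
  obtain ⟨t', ht', hq'⟩ := exists_advQ_eq_of_le (N := N) (M := N + c + 1)
    (fun M y => plant_eq_plant_of_ne hn hw)
    (fun M hM hMw t ht => hguess (⟨M, by omega⟩, ⟨t, ht⟩) hM)
    ht (by omega) (by omega) hiw hq
  refine ⟨(pointerBits hκ hN.le).get ω.2, t', ht', ?_⟩
  simp only [Reveals, Lens.set_get]
  exact hq' ▸ readsBlock_node ω.1.2 ⟨N + c + 1, by omega⟩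

theorem unifProb_hit_le [Fintype S] (hv : v = 2 ^ κ) (hn : W + 2 * u ≤ n) (hw : w < 2 ^ W)
    (hκu : κ + u ≤ n) (hN : N + p < w) (α : ℕ) :
    unifProb (fun ω : Sample n u v w => ∃ t < q, ∃ i, N + p ≤ i ∧ i < w ∧
      advQ n (oracle W κ ω w) (program W κ N F σ ω) t = node W κ ω.2 ω.1.2 i) ≤
      w * q * ((2 : ℝ) ^ u)⁻¹ +
        (Fintype.card S * ((v : ℝ) * (q * (v : ℝ) ^ p) / (2 : ℝ) ^ u) ^ (α + 1) +
          ((α : ℝ) / v) ^ p) := by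
  have hκ : κ ≤ n := by omega
  let B := knownBlocks (p := p) W q hκ hN.le F σ
  refine (unifProb_mono (Q := fun ω => _ ∨ α + 1 ≤ (B ω).ncard ∨ (B ω).ncard ≤ α ∧
    ∀ c : Fin p, pointer κ ω.2 (N + c + 1) ∈ B ω) fun ω hhit => ?_).trans <|
    (unifProb_or_le _ _).trans <| add_le_add
      ((unifProb_exists_le fun x : Fin w × Fin q =>
        unifProb_guess_le (N := N) F σ hn hκu x.1 x.2).trans_eq (by simp)) <|
      (unifProb_or_le _ _).trans <| add_le_add
        (unifProb_le_ncard_knownBlocks_le F σ hv hn hw hκ hN.le _)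
        (unifProb_pointers_mem_knownBlocks_le F σ hv hκ hN.le α)
  refine (guess_or_pointers_mem_knownBlocks F σ (by omega) hw hκ hN ω hhit).imp_right
    fun hmem => ?_
  exact (le_or_gt (B ω).ncard α).symm.imp_right fun hle => ⟨hle, hmem⟩

end SingleRound

section Rounds

theorem exists_first_ahead {H : ℕ → ℕ → Prop} {p k : ℕ}
    (h : ∃ k' ≤ k, ∃ j, (k + 1) * p ≤ j ∧ H k' j) :
    ∃ k' ≤ k, (∃ j, (k' + 1) * p ≤ j ∧ H k' j) ∧ ∀ l < k', ∀ j, k' * p ≤ j → ¬ H l j := by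
  classical
  have hahead : ∃ k', ∃ j, (k' + 1) * p ≤ j ∧ H k' j := by
    obtain ⟨k', hk', j, hj, hH⟩ := h
    exact ⟨k', j, le_trans (by gcongr) hj, hH⟩
  refine ⟨Nat.find hahead, ?_, Nat.find_spec hahead, fun l hl j hj hH => ?_⟩
  · obtain ⟨k', hk', j, hj, hH⟩ := h
    exact (Nat.find_min' hahead ⟨j, le_trans (by gcongr) hj, hH⟩).trans hk'
  · exact Nat.find_min hahead hl ⟨j, le_trans (by gcongr; omega) hj, hH⟩

variable {n u v w W κ p s q m k N : ℕ} [NeZero v] (A : MPC n s q m (Fin v → Bits u))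

theorem mquery_eq_advQ_program (hW : W ≤ n) (hw : w < 2 ^ W) {ω : Sample n u v w}
    (h : ∀ k' < k, ∀ i, ∀ t < q, ∀ j, N ≤ j → j < w →
      mquery A (oracle W κ ω w) ω.1.2 k' i t ≠ node W κ ω.2 ω.1.2 j) (i : Fin m) (t : ℕ) :
    mquery A (oracle W κ ω w) ω.1.2 k i t = advQ n (oracle W κ ω w)
      (program W κ N (A.qf k i) (fun RO X => mstate A RO X k i) ω) t := by
  have hstate : mstate A (oracle W κ ω w) ω.1.2 k = mstate A (oracle W κ ω N) ω.1.2 k :=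
    mstate_congr A fun k' hk' i t ht => plant_eq_plant_of_ne hW hw (h k' hk' i t ht)
  rw [mquery, hstate, program]

theorem exists_program_hit (hW : W ≤ n) (hw : w < 2 ^ W) {ω : Sample n u v w}
    (h : ∃ k' ≤ k, ∃ i : Fin m, ∃ t < q, ∃ j, (k + 1) * p ≤ j ∧ j < w ∧
      mquery A (oracle W κ ω w) ω.1.2 k' i t = node W κ ω.2 ω.1.2 j) :
    ∃ x : Fin (k + 1) × Fin m, ∃ t < q, ∃ j, x.1 * p + p ≤ j ∧ j < w ∧
      advQ n (oracle W κ ω w) (program W κ (x.1 * p) (A.qf x.1 x.2)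
        (fun RO X => mstate A RO X x.1 x.2) ω) t = node W κ ω.2 ω.1.2 j := by
  obtain ⟨k', hk', i, t, ht, j, hj, hjw, hq⟩ := h
  obtain ⟨l, hl, ⟨j, hj, hjw, i, t, ht, hq⟩, hbefore⟩ := exists_first_ahead
    (H := fun k' j => j < w ∧ ∃ i, ∃ t < q,
      mquery A (oracle W κ ω w) ω.1.2 k' i t = node W κ ω.2 ω.1.2 j)
    ⟨k', hk', j, hj, hjw, i, t, ht, hq⟩
  refine ⟨(⟨l, by omega⟩, i), t, ht, j, by rwa [← Nat.succ_mul], hjw, ?_⟩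
  rw [← hq]
  exact (mquery_eq_advQ_program A hW hw (fun l' hl' i t ht j hj hjw hq =>
    hbefore l' hl' j hj ⟨hjw, i, t, ht, hq⟩) i t).symm

theorem unifProb_mquery_eq_lineE_le (hv : v = 2 ^ κ) (hn : W + 2 * u ≤ n) (hw : w < 2 ^ W)
    (hκu : κ + u ≤ n) (hk : (k + 1) * p < w) (α : ℕ) :
    unifProb (fun ω : (Bits n → Bits n) × (Fin v → Bits u) =>
      ∃ k' ≤ k, ∃ i : Fin m, ∃ t < q, ∃ idx : ℕ, idx ≤ w ∧ (k + 1) * p < idx ∧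
        mquery A ω.1 ω.2 k' i t = lineE n u v W κ ω.1 ω.2 (idx - 1)) ≤
      (k + 1) * m * (w * q * ((2 : ℝ) ^ u)⁻¹ +
        ((2 : ℝ) ^ s * ((v : ℝ) * (q * (v : ℝ) ^ p) / (2 : ℝ) ^ u) ^ (α + 1) +
          ((α : ℝ) / v) ^ p)) := by
  have hW : W ≤ n := by omega
  rw [unifProb_eq_plant (w := w) (κ := κ) hW hw]
  refine (unifProb_mono fun ω h => exists_program_hit (p := p) A hW hw ?_).trans
    ((unifProb_exists_le fun x : Fin (k + 1) × Fin m =>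
      unifProb_hit_le (A.qf x.1 x.2) _ hv hn hw hκu ?_ α).trans_eq (by simp))
  · obtain ⟨k', hk', i, t, ht, idx, hidx, hkidx, hq⟩ := h
    rw [lineE_plant hW hw (by omega)] at hq
    exact ⟨k', hk', i, t, ht, idx - 1, by omega, by omega, hq⟩
  · calc (x.1 : ℕ) * p + p ≤ k * p + p := by gcongr; omega
      _ = (k + 1) * p := by ring
      _ < w := hk

end Rounds

section Bound

open Real

theorem mul_pow_le_two_rpow_neg {u v p s q α : ℕ} (hv : 1 ≤ v) (hq : 1 ≤ q) {D : ℝ}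
    (hD : 0 < D) (hDu : D ≤ u - (p + 1) * logb 2 v - logb 2 q) (hα : s / D + 1 ≤ α) :
    (2 : ℝ) ^ s * ((v : ℝ) * (q * (v : ℝ) ^ p) / (2 : ℝ) ^ u) ^ α ≤ (2 : ℝ) ^ (-D) := by
  have hv0 : (0 : ℝ) < v := by exact_mod_cast hv
  have hq0 : (0 : ℝ) < q := by exact_mod_cast hq
  have hbase : (v : ℝ) * (q * (v : ℝ) ^ p) / (2 : ℝ) ^ u ≤ (2 : ℝ) ^ (-D) := by
    rw [← logb_le_iff_le_rpow one_lt_two (by positivity), logb_div (by positivity) (by positivity),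
      logb_mul hv0.ne' (by positivity), logb_mul hq0.ne' (by positivity), logb_pow, logb_pow,
      logb_self_eq_one one_lt_two]
    linarith
  have hexp : s + -D * α ≤ -D := by
    have hmul := mul_le_mul_of_nonneg_left hα hD.le
    rw [mul_add, mul_div_cancel₀ _ hD.ne'] at hmul
    linarith
  calc (2 : ℝ) ^ s * ((v : ℝ) * (q * (v : ℝ) ^ p) / (2 : ℝ) ^ u) ^ α
      ≤ (2 : ℝ) ^ s * ((2 : ℝ) ^ (-D)) ^ α := by gcongr
    _ = (2 : ℝ) ^ (s + -D * α) := by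
        rw [rpow_add two_pos, rpow_natCast, rpow_mul two_pos.le, rpow_natCast]
    _ ≤ (2 : ℝ) ^ (-D) := rpow_le_rpow_of_exponent_le one_le_two hexp

theorem succ_mul_lt_of_lt_div_sub_one {k w p : ℕ} (h : (k : ℝ) < w / p - 1) :
    (k + 1) * p < w := by
  rcases p.eq_zero_or_pos with rfl | hp
  · rw [Nat.cast_zero, div_zero] at h
    linarith [k.cast_nonneg (α := ℝ)]
  · exact_mod_cast (lt_div_iff₀ (by exact_mod_cast hp)).1 (lt_sub_iff_add_lt.1 h)

end Bound

end LineMPC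

theorem stmt16_general {n u v w κ p W s q m k : ℕ} (hv : v = 2 ^ κ) (hw : w < 2 ^ W)
    (hn : W + 2 * u ≤ n) (hκu : κ + u ≤ n) (hq : 1 ≤ q)
    (hu : ((p : ℝ) + 2) * Real.logb 2 v + Real.logb 2 q < (u : ℝ)) {h : ℝ}
    (hh : h = (s : ℝ) / ((u : ℝ) - ((p : ℝ) + 2) * Real.logb 2 v - Real.logb 2 q) + 1)
    (A : MPC n s q m (Fin v → Bits u)) (hk : (k + 1) * p < w) :
    unifProb (fun ω : (Bits n → Bits n) × (Fin v → Bits u) =>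
      ∃ k' ≤ k, ∃ i : Fin m, ∃ t < q, ∃ idx : ℕ, idx ≤ w ∧ (k + 1) * p < idx ∧
        mquery A ω.1 ω.2 k' i t = lineE n u v W κ ω.1 ω.2 (idx - 1)) ≤
    ((k : ℝ) + 1) * m * ((h / v) ^ p + (w : ℝ) * q * (2 : ℝ) ^ (-(u : ℝ)) +
      (2 : ℝ) ^ (-((u : ℝ) - ((p : ℝ) + 2) * Real.logb 2 v - Real.logb 2 q))) := by
  have hv1 : 1 ≤ v := hv ▸ Nat.one_le_two_pow
  have : NeZero v := ⟨by omega⟩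
  set D : ℝ := (u : ℝ) - ((p : ℝ) + 2) * Real.logb 2 v - Real.logb 2 q with hD
  have hD0 : 0 < D := by rw [hD]; linarith
  have hDu : D ≤ u - (p + 1) * Real.logb 2 v - Real.logb 2 q := by
    have hlog : 0 ≤ Real.logb 2 v := Real.logb_nonneg one_lt_two (by exact_mod_cast hv1)
    rw [hD]
    linarith
  have hh0 : 0 ≤ h := by rw [hh]; positivity
  have hα : s / D + 1 ≤ ((⌊h⌋₊ + 1 : ℕ) : ℝ) := by
    rw [← hh]
    exact_mod_cast (Nat.lt_floor_add_one h).le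
  have hfloor : ((⌊h⌋₊ : ℝ) / v) ^ p ≤ (h / v) ^ p := by gcongr; exact Nat.floor_le hh0
  refine (LineMPC.unifProb_mquery_eq_lineE_le A hv hn hw hκu hk ⌊h⌋₊).trans ?_
  rw [Real.rpow_neg two_pos.le, Real.rpow_natCast]
  refine mul_le_mul_of_nonneg_left ?_ (by positivity)
  linarith [LineMPC.mul_pow_le_two_rpow_neg hv1 hq hD0 hDu hα]

/-- **Inductive claim in the proof of Lemma 3.6 (up to an absolute constant `K`).**
In the Line setting with `u > (p+2)·log₂ v + log₂ q` and
`h := s/(u − (p+2)·log₂ v − log₂ q) + 1`, for every deterministic MPC algorithm and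
every round `k` with `0 ≤ k < w/p − 1`, the probability over uniformly random `(RO, X)`
that some query made through round `k` hits `C^{(k+1)} = {e_i : (k+1)·p < i ≤ w}` is at
most `K·(k+1)·m·((h/v)^p + w·q·v^p·2^(−u) + w·2^(−(u − (p+2)·log₂ v − log₂ q)))`.
(Here `lineE … (idx−1)` is the paper's `e_idx`.) -/
theorem stmt16 : ∃ K : ℝ, 0 < K ∧
    ∀ (n u v w κ p W s q m : ℕ),
    1 ≤ u → 2 ≤ w → 1 ≤ κ → v = 2 ^ κ →
    p = ⌈(Real.logb 2 w) ^ 2⌉₊ → W = Nat.clog 2 (w + p + 2) →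
    W + 2 * u ≤ n → κ + u ≤ n → 1 ≤ q → 1 ≤ m →
    ((p : ℝ) + 2) * Real.logb 2 v + Real.logb 2 q < (u : ℝ) →
    ∀ h : ℝ, h = (s : ℝ) / ((u : ℝ) - ((p : ℝ) + 2) * Real.logb 2 v - Real.logb 2 q) + 1 →
    ∀ (A : MPC n s q m (Fin v → Bits u)) (k : ℕ), (k : ℝ) < (w : ℝ) / (p : ℝ) - 1 →
    unifProb (fun ω : (Bits n → Bits n) × (Fin v → Bits u) =>
      ∃ k' ≤ k, ∃ i : Fin m, ∃ t < q, ∃ idx : ℕ, idx ≤ w ∧ (k + 1) * p < idx ∧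
        mquery A ω.1 ω.2 k' i t = lineE n u v W κ ω.1 ω.2 (idx - 1)) ≤
    K * ((k : ℝ) + 1) * (m : ℝ) *
      ((h / (v : ℝ)) ^ p + (w : ℝ) * q * (v : ℝ) ^ p * (2 : ℝ) ^ (-(u : ℝ)) +
        (w : ℝ) *
          (2 : ℝ) ^ (-((u : ℝ) - ((p : ℝ) + 2) * Real.logb 2 v - Real.logb 2 q))) := by
  refine ⟨1, one_pos, fun n u v w κ p W s q m _ hw _ hv _ hW hn hκu hq _ hu h hh A k hk => ?_⟩
  have hvp : (1 : ℝ) ≤ (v : ℝ) ^ p := one_le_pow₀ (by exact_mod_cast hv ▸ Nat.one_le_two_pow)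
  have hwW : w < 2 ^ W := hW ▸ (by omega : w < w + p + 2).trans_le (Nat.le_pow_clog one_lt_two _)
  refine (stmt16_general hv hwW hn hκu hq hu hh A
    (LineMPC.succ_mul_lt_of_lt_div_sub_one hk)).trans ?_
  rw [one_mul]
  gcongr _ * _ * (_ + ?_ * _ + ?_)
  · exact le_mul_of_one_le_right (by positivity) hvp
  · exact le_mul_of_one_le_left (by positivity) (by exact_mod_cast one_le_two.trans hw)
end
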